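/- Assume f satisfies (f1) and (f2), and let α* ∈ G_k for some k ≥ 1. Then there exist a > 0 and δ₁ > 0 such that for every α ∈ (α*−δ₁, α*+δ₁) the solution u(·,α) has exactly k extremal points (zeros of u'(·,α)) in [0, T_{k−1}(α*)+a]; every extremal value E of u(·,α) there satisfies E < −β if E is a local minimum value and E > β if E is a local maximum value. Moreover, if α₁ < α₂ both lie in (α*−δ₁, α*+δ₁), then (i) the solutions u(·,α₁) and u(·,α₂) intersect between any two of their consecutive extremal points, and (ii) there exists an intersection point of u(·,α₁) and u(·,α₂) in (T_{k−1}(α*), Z_k(α*)). -/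

import Mathlib

open Set Filter MeasureTheory

namespace Paper

noncomputable section

/-- `F s = ∫₀ˢ f t dt`. -/
def Fint (f : ℝ → ℝ) (s : ℝ) : ℝ := ∫ t in (0:ℝ)..s, f t

/-- Hypothesis (f1): `f` is odd, `f 0 = 0`, there are `β > b > 0` with `f > 0` on `(b,∞)`,
`f ≤ 0`, `f ≢ 0` on `[0,b]`, and `F β = 0`. -/
def Hf1 (f : ℝ → ℝ) (b β : ℝ) : Prop :=
  (∀ s, f (-s) = -f s) ∧ f 0 = 0 ∧ 0 < b ∧ b < β ∧
    (∀ s, b < s → 0 < f s) ∧ (∀ s ∈ Icc (0:ℝ) b, f s ≤ 0) ∧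
    (∃ s ∈ Icc (0:ℝ) b, f s ≠ 0) ∧ Fint f β = 0

/-- Hypothesis (f2): `f` continuous on `[0,∞)`, C¹ on `(0,∞)`, `f' ∈ L¹(0,1)`. -/
def Hf2 (f : ℝ → ℝ) : Prop :=
  ContinuousOn f (Ici 0) ∧ (∀ s : ℝ, 0 < s → DifferentiableAt ℝ f s) ∧
    ContinuousOn (deriv f) (Ioi 0) ∧ IntegrableOn (deriv f) (Ioo 0 1)

/-- Hypothesis (f3): `f s ≥ f' s * (s - β)` for `s ≥ β`. -/
def Hf3 (f : ℝ → ℝ) (β : ℝ) : Prop := ∀ s, β ≤ s → deriv f s * (s - β) ≤ f s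

/-- Hypothesis (f4): `(F/f)' s ≥ (n-2)/(2n)` for `s > β`. -/
def Hf4 (n : ℕ) (f : ℝ → ℝ) (β : ℝ) : Prop :=
  ∀ s, β < s → ((n : ℝ) - 2) / (2 * (n : ℝ)) ≤ deriv (fun t => Fint f t / f t) s

/-- Hypothesis (f4'): `(F/f)' s ≥ (n-2)/2` for `s > β`. -/
def Hf4' (n : ℕ) (f : ℝ → ℝ) (β : ℝ) : Prop :=
  ∀ s, β < s → ((n : ℝ) - 2) / 2 ≤ deriv (fun t => Fint f t / f t) s

/-- Hypothesis (f5): `s ↦ s f' s / f s` is nonincreasing on `[β,∞)`. -/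
def Hf5 (f : ℝ → ℝ) (β : ℝ) : Prop := AntitoneOn (fun s => s * deriv f s / f s) (Ici β)

/-- Hypothesis (f6): `β f' β / f β ≤ n/(n-2)`. -/
def Hf6 (n : ℕ) (f : ℝ → ℝ) (β : ℝ) : Prop := β * deriv f β / f β ≤ (n : ℝ) / ((n : ℝ) - 2)

/-- Hypothesis (f1'): `f 0 = 0` and `s f s > 0` for `s > 0`. -/
def Hf1' (f : ℝ → ℝ) : Prop := f 0 = 0 ∧ ∀ s : ℝ, 0 < s → 0 < s * f s

/-- Hypothesis (f3'): `f s ≥ s f' s` for `s > 0`, with strict inequality at points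
arbitrarily close to `0`. -/
def Hf3' (f : ℝ → ℝ) : Prop :=
  (∀ s : ℝ, 0 < s → s * deriv f s ≤ f s) ∧
    ∀ ε : ℝ, 0 < ε → ∃ s ∈ Ioo (0:ℝ) ε, s * deriv f s < f s

/-- `v` is a C² solution of (E) on `(0,∞)`, continuous on `[0,∞)`,
with `v 0 = α` and `v' 0 = 0`. -/
def IVPsol (n : ℕ) (f : ℝ → ℝ) (α : ℝ) (v : ℝ → ℝ) : Prop :=
  v 0 = α ∧ deriv v 0 = 0 ∧ ContinuousOn v (Ici 0) ∧
    (∀ r : ℝ, 0 < r → DifferentiableAt ℝ v r ∧ DifferentiableAt ℝ (deriv v) r) ∧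
    (∀ r : ℝ, 0 < r → deriv (deriv v) r + ((n : ℝ) - 1) / r * deriv v r + f (v r) = 0)

/-- The family `α ↦ u α` of solutions of the IVP, with `u α r` and `u' α r`
continuous in `(α, r)`. -/
def Family (n : ℕ) (f : ℝ → ℝ) (u : ℝ → ℝ → ℝ) : Prop :=
  (∀ α : ℝ, 0 < α → IVPsol n f α (u α)) ∧
    ContinuousOn (fun p : ℝ × ℝ => u p.1 p.2) (Ioi 0 ×ˢ Ici 0) ∧
    ContinuousOn (fun p : ℝ × ℝ => deriv (u p.1) p.2) (Ioi 0 ×ˢ Ici 0)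

/-- The set whose supremum is `Z_k α`, given `T = T_{k-1} α`. -/
def ZsetAux (u : ℝ → ℝ → ℝ) (k : ℕ) (T α : ℝ) : Set ℝ :=
  {r | T < r ∧ ∀ s ∈ Ioo T r, (-1 : ℝ) ^ k * u α s < 0 ∧ 0 < (-1 : ℝ) ^ k * deriv (u α) s}

/-- The pair `(Z_k, T_k)`, with `T₀ = 0`;
`Z_k α = sup {r > T_{k-1} α | (-1)^k u < 0, (-1)^k u' > 0 on (T_{k-1} α, r)}` and
`T_k α = inf {r > Z_k α | u'(r, α) = 0}`. -/
def ZT (u : ℝ → ℝ → ℝ) : ℕ → (ℝ → ℝ) × (ℝ → ℝ)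
  | 0 => (fun _ => 0, fun _ => 0)
  | k + 1 =>
    let Z : ℝ → ℝ := fun α => sSup (ZsetAux u (k + 1) ((ZT u k).2 α) α)
    (Z, fun α => sInf {r | Z α < r ∧ deriv (u α) r = 0})

/-- `Z_k α` (as a real number; the genuine value when the defining set is bounded above). -/
def Zk (u : ℝ → ℝ → ℝ) (k : ℕ) (α : ℝ) : ℝ := (ZT u k).1 α

/-- `T_k α`, with `T₀ = 0`. -/
def Tk (u : ℝ → ℝ → ℝ) (k : ℕ) (α : ℝ) : ℝ := (ZT u k).2 α

/-- The defining set of `Z_k α`; `Z_k α = ∞` iff this set is unbounded above. -/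
def ZsetK (u : ℝ → ℝ → ℝ) (k : ℕ) (α : ℝ) : Set ℝ := ZsetAux u k (Tk u (k - 1) α) α

open Classical in
/-- The value of `u (·, α)` at `Z_k α`, as a limit `r → ∞` when `Z_k α = ∞`. -/
def uAtZ (u : ℝ → ℝ → ℝ) (k : ℕ) (α : ℝ) : ℝ :=
  if BddAbove (ZsetK u k α) then u α (Zk u k α) else limUnder atTop (u α)

open Classical in
/-- The value of `u' (·, α)` at `Z_k α`, as a limit `r → ∞` when `Z_k α = ∞`. -/
def duAtZ (u : ℝ → ℝ → ℝ) (k : ℕ) (α : ℝ) : ℝ :=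
  if BddAbove (ZsetK u k α) then deriv (u α) (Zk u k α) else limUnder atTop (deriv (u α))

open Classical in
/-- `Z_k α` as an extended real number. -/
def ZkE (u : ℝ → ℝ → ℝ) (k : ℕ) (α : ℝ) : WithTop ℝ :=
  if BddAbove (ZsetK u k α) then (Zk u k α : WithTop ℝ) else ⊤

/-- Membership in `F̃_k` (for `α ∈ N_{k-1}`): `(-1)^k u' (r, α) < 0` for all `r > Z_{k-1} α`. -/
def Ftil (u : ℝ → ℝ → ℝ) (k : ℕ) (α : ℝ) : Prop :=
  ∀ r, Zk u (k - 1) α < r → (-1 : ℝ) ^ k * deriv (u α) r < 0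

/-- The sets `N_k` (with `N₀ := (0,∞)`). -/
def Nk (u : ℝ → ℝ → ℝ) : ℕ → Set ℝ
  | 0 => Ioi 0
  | 1 => {α | 0 < α ∧ uAtZ u 1 α = 0 ∧ duAtZ u 1 α < 0}
  | k + 2 => {α | α ∈ Nk u (k + 1) ∧ ¬Ftil u (k + 2) α ∧ uAtZ u (k + 2) α = 0 ∧
      0 < (-1 : ℝ) ^ (k + 2) * duAtZ u (k + 2) α}

/-- The sets `G_k`. -/
def Gk (u : ℝ → ℝ → ℝ) : ℕ → Set ℝ
  | 0 => ∅
  | 1 => {α | 0 < α ∧ uAtZ u 1 α = 0 ∧ duAtZ u 1 α = 0}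
  | k + 2 => {α | α ∈ Nk u (k + 1) ∧ ¬Ftil u (k + 2) α ∧ uAtZ u (k + 2) α = 0 ∧
      duAtZ u (k + 2) α = 0}

/-- The set `F̃_k` (for `k ≥ 2`). -/
def FtilSet (u : ℝ → ℝ → ℝ) (k : ℕ) : Set ℝ := {α | α ∈ Nk u (k - 1) ∧ Ftil u k α}

/-- The set `F_k` (for `k ≥ 2`). -/
def Fk (u : ℝ → ℝ → ℝ) (k : ℕ) : Set ℝ :=
  {α | α ∈ Nk u (k - 1) ∧ ¬Ftil u k α ∧ (-1 : ℝ) ^ k * uAtZ u k α < 0}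

/-- The sets `P_k`. -/
def Pk (u : ℝ → ℝ → ℝ) : ℕ → Set ℝ
  | 0 => ∅
  | 1 => {α | 0 < α ∧ 0 < uAtZ u 1 α}
  | k + 2 => FtilSet u (k + 2) ∪ Fk u (k + 2)

/-- The set of extremal points (zeros of `u' (·, α)`) in `[0, A]`. -/
def ExtSet (u : ℝ → ℝ → ℝ) (α A : ℝ) : Set ℝ := {r | r ∈ Icc 0 A ∧ deriv (u α) r = 0}

/-- The conclusion of the δ₁-lemma (Lemma 4.1): every solution with initial value in
`(α*-δ₁, α*+δ₁)` has exactly `k` extremal points in `[0, T_{k-1}(α*) + a]`, with minimum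
values `< -β` and maximum values `> β`; moreover any two such solutions intersect between
any two of their consecutive extremal points, and in `(T_{k-1}(α*), Z_k(α*))`. -/
def DeltaOneLemma (f : ℝ → ℝ) (β : ℝ) (u : ℝ → ℝ → ℝ) (k : ℕ) (αs a δ₁ : ℝ) : Prop :=
  0 < a ∧ 0 < δ₁ ∧
    (∀ α ∈ Ioo (αs - δ₁) (αs + δ₁),
      (ExtSet u α (Tk u (k - 1) αs + a)).Finite ∧
        (ExtSet u α (Tk u (k - 1) αs + a)).ncard = k ∧
        ∀ r ∈ ExtSet u α (Tk u (k - 1) αs + a),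
          (IsLocalMin (u α) r → u α r < -β) ∧ (IsLocalMax (u α) r → β < u α r)) ∧
    ∀ α₁ ∈ Ioo (αs - δ₁) (αs + δ₁), ∀ α₂ ∈ Ioo (αs - δ₁) (αs + δ₁), α₁ < α₂ →
      (∀ i : ℕ, 1 ≤ i → i ≤ k - 1 →
        ∃ t, max (Tk u (i - 1) α₁) (Tk u (i - 1) α₂) < t ∧
          t < min (Tk u i α₁) (Tk u i α₂) ∧ u α₁ t = u α₂ t) ∧
      ∃ t, Tk u (k - 1) αs < t ∧ (BddAbove (ZsetK u k αs) → t < Zk u k αs) ∧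
        u α₁ t = u α₂ t

/-- `ρ` is the inverse of the monotone branch of `v` on `[t₁, t₂]`, whose set of values
is `[m, M]`. -/
def InvBranch (v ρ : ℝ → ℝ) (t₁ t₂ m M : ℝ) : Prop :=
  (∀ s ∈ Icc m M, ρ s ∈ Icc t₁ t₂ ∧ v (ρ s) = s) ∧
    ∀ s ∈ Ioo m M, HasDerivAt ρ (1 / deriv v (ρ s)) s

/-- `ρ` inverts a decreasing branch of `v` over the value interval `[m, M]`, along which
`(v')² + 2F > 0`. -/
def DecBranchInv (f : ℝ → ℝ) (v ρ : ℝ → ℝ) (m M : ℝ) : Prop :=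
  ∀ s ∈ Icc m M, 0 ≤ ρ s ∧ v (ρ s) = s ∧ deriv v (ρ s) < 0 ∧
    HasDerivAt ρ (1 / deriv v (ρ s)) s ∧ 0 < (deriv v (ρ s)) ^ 2 + 2 * Fint f s

/-- The functional `Q(s) = -4 (F/f)(s) r/r' - r²/(r')² - 2 r² F(s) + H(s)` computed along
the branch inverse `ρ`. -/
def Qfun (f H ρ : ℝ → ℝ) (s : ℝ) : ℝ :=
  -4 * (Fint f s / f s) * (ρ s / deriv ρ s) - (ρ s) ^ 2 / (deriv ρ s) ^ 2 -
    2 * (ρ s) ^ 2 * Fint f s + H s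

/-- The functional `P(s) = -2n (F/f)(s) r^{n-1}/r' - r^n/(r')² - 2 r^n F(s)`. -/
def Pfun (n : ℕ) (f : ℝ → ℝ) (ρ : ℝ → ℝ) (s : ℝ) : ℝ :=
  -(2 * (n : ℝ)) * (Fint f s / f s) * (ρ s ^ (n - 1) / deriv ρ s) -
    ρ s ^ n / (deriv ρ s) ^ 2 - 2 * ρ s ^ n * Fint f s

/-- The functional `W(s) = r(s) √((u'(r(s)))² + 2 F(s))`. -/
def Wfun (f v ρ : ℝ → ℝ) (s : ℝ) : ℝ :=
  ρ s * Real.sqrt ((deriv v (ρ s)) ^ 2 + 2 * Fint f s)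

/-- The functional `W̃(s) = r(s)^{n-1} √((u'(r(s)))² + 2 F(s))`. -/
def Wtil (n : ℕ) (f : ℝ → ℝ) (v ρ : ℝ → ℝ) (s : ℝ) : ℝ :=
  ρ s ^ (n - 1) * Real.sqrt ((deriv v (ρ s)) ^ 2 + 2 * Fint f s)

/-- `v` changes sign at `z ∈ (0,∞)`: `v z = 0` and `v` takes both signs in every
neighborhood of `z` (within `(0,∞)`). -/
def SignChange (v : ℝ → ℝ) (z : ℝ) : Prop :=
  v z = 0 ∧ ∀ ε : ℝ, 0 < ε →
    (∃ x ∈ Ioo (z - ε) (z + ε) ∩ Ioi 0, 0 < v x) ∧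
    (∃ x ∈ Ioo (z - ε) (z + ε) ∩ Ioi 0, v x < 0)

/-- `v` has exactly `m` sign changes in `(0,∞)`. -/
def ExactSignChanges (v : ℝ → ℝ) (m : ℕ) : Prop :=
  {z | 0 < z ∧ SignChange v z}.Finite ∧ {z | 0 < z ∧ SignChange v z}.ncard = m

/-- Bound state: a C² solution of (E) on `(0,∞)` with `v' 0 = 0` and `v r → 0` as `r → ∞`. -/
def BoundState (n : ℕ) (f : ℝ → ℝ) (v : ℝ → ℝ) : Prop :=
  ContinuousOn v (Ici 0) ∧
    (∀ r : ℝ, 0 < r → DifferentiableAt ℝ v r ∧ DifferentiableAt ℝ (deriv v) r) ∧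
    (∀ r : ℝ, 0 < r → deriv (deriv v) r + ((n : ℝ) - 1) / r * deriv v r + f (v r) = 0) ∧
    deriv v 0 = 0 ∧ Tendsto v atTop (nhds 0)

/-- Solution of the Dirichlet problem on the ball of radius `R`. -/
def DirichletSol (n : ℕ) (f : ℝ → ℝ) (R : ℝ) (v : ℝ → ℝ) : Prop :=
  ContinuousOn v (Icc 0 R) ∧
    (∀ r ∈ Ioo (0:ℝ) R, DifferentiableAt ℝ v r ∧ DifferentiableAt ℝ (deriv v) r) ∧
    (∀ r ∈ Ioo (0:ℝ) R, deriv (deriv v) r + ((n : ℝ) - 1) / r * deriv v r + f (v r) = 0) ∧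
    deriv v 0 = 0 ∧ v R = 0

end
end Paper

open Paper Set Filter MeasureTheory

/-- A function which is nonnegative at the right endpoint and strictly decreasing through each of
its zeros is nonnegative. -/
lemma nonneg_of_deriv_neg_of_eq_zero {h h' : ℝ → ℝ} {a b : ℝ}
    (hd : ∀ x ∈ Icc a b, HasDerivAt h (h' x) x) (hb : 0 ≤ h b)
    (hz : ∀ x ∈ Icc a b, h x = 0 → h' x < 0) : ∀ x ∈ Icc a b, 0 ≤ h x := by
  have hneg : ∀ y ∈ Icc (-b) (-a), HasDerivAt (fun y => -h (-y)) (h' (-y)) y := by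
    intro y hy
    have h1 := (hd (-y) ⟨by linarith [hy.2], by linarith [hy.1]⟩).comp y (hasDerivAt_neg y)
    exact h1.neg.congr_deriv (by simp)
  have key := image_le_of_deriv_right_lt_deriv_boundary (f := fun y => -h (-y))
    (f' := fun y => h' (-y)) (a := -b) (b := -a) (B := fun _ => 0) (B' := fun _ => 0)
    (fun y hy => (hneg y hy).continuousAt.continuousWithinAt)
    (fun y hy => (hneg y ⟨hy.1, hy.2.le⟩).hasDerivWithinAt)
    (by simpa using hb) (fun y => hasDerivAt_const y 0)
    (fun y hy h0 => hz (-y) ⟨by linarith [hy.2], by linarith [hy.1]⟩ (by linarith))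
  intro x hx
  have := key (x := -x) ⟨by linarith [hx.2], by linarith [hx.1]⟩
  simp only [neg_neg] at this
  linarith

lemma le_of_hasDerivAt_nonpos {h h' : ℝ → ℝ} {a b : ℝ} (hab : a ≤ b)
    (hd : ∀ x ∈ Icc a b, HasDerivAt h (h' x) x) (hn : ∀ x ∈ Icc a b, h' x ≤ 0) : h b ≤ h a :=
  antitoneOn_of_hasDerivWithinAt_nonpos (convex_Icc a b)
    (fun x hx => (hd x hx).continuousAt.continuousWithinAt)
    (fun x hx => (hd x (interior_subset hx)).hasDerivWithinAt)
    (fun x hx => hn x (interior_subset hx)) (left_mem_Icc.2 hab) (right_mem_Icc.2 hab) hab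

/-- The inverse of a decreasing function with negative derivative. -/
lemma exists_inverse_of_deriv_neg {X X' : ℝ → ℝ} {a b : ℝ} (hab : a < b)
    (hX : ∀ r ∈ Icc a b, HasDerivAt X (X' r) r) (hneg : ∀ r ∈ Icc a b, X' r < 0) :
    ∃ ρ : ℝ → ℝ, ∀ s ∈ Ioo (X b) (X a),
      ρ s ∈ Ioo a b ∧ X (ρ s) = s ∧ HasDerivAt ρ (X' (ρ s))⁻¹ s := by
  have hc : ContinuousOn X (Icc a b) := fun r hr => (hX r hr).continuousAt.continuousWithinAt
  have hanti : StrictAntiOn X (Icc a b) :=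
    strictAntiOn_of_hasDerivWithinAt_neg (convex_Icc a b) hc
      (fun x hx => (hX x (interior_subset hx)).hasDerivWithinAt)
      (fun x hx => hneg x (interior_subset hx))
  have hex : ∀ s, ∃ r, s ∈ Ioo (X b) (X a) → r ∈ Ioo a b ∧ X r = s := by
    intro s
    by_cases hs : s ∈ Ioo (X b) (X a)
    · obtain ⟨r, hr, hrs⟩ := intermediate_value_Ioo' hab.le hc hs
      exact ⟨r, fun _ => ⟨hr, hrs⟩⟩
    · exact ⟨0, fun h => absurd h hs⟩
  choose ρ hρ using hex
  refine ⟨ρ, fun s hs => ⟨(hρ s hs).1, (hρ s hs).2, ?_⟩⟩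
  have hnhds : ∀ᶠ t in nhds s, t ∈ Ioo (X b) (X a) := Ioo_mem_nhds hs.1 hs.2
  obtain ⟨hr, hrs⟩ := hρ s hs
  refine HasDerivAt.of_local_left_inverse ?_ (hX _ ⟨hr.1.le, hr.2.le⟩)
    (hneg _ ⟨hr.1.le, hr.2.le⟩).ne (hnhds.mono fun t ht => (hρ t ht).2)
  refine tendsto_order.2 ⟨fun c hcs => ?_, fun c hcs => ?_⟩
  · rcases lt_or_ge c a with hca | hca
    · exact hnhds.mono fun t ht => hca.trans (hρ t ht).1.1
    have hcI : c ∈ Icc a b := ⟨hca, (hcs.trans hr.2).le⟩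
    have h1 : s < X c := hrs ▸ hanti hcI ⟨hr.1.le, hr.2.le⟩ hcs
    filter_upwards [hnhds, Iio_mem_nhds h1] with t ht htc
    obtain ⟨hm, he⟩ := hρ t ht
    by_contra hle
    have := hanti.antitoneOn ⟨hm.1.le, hm.2.le⟩ hcI (not_lt.1 hle)
    rw [he] at this
    exact absurd htc (not_lt.2 this)
  · rcases lt_or_ge b c with hca | hca
    · exact hnhds.mono fun t ht => (hρ t ht).1.2.trans hca
    have hcI : c ∈ Icc a b := ⟨(hr.1.trans hcs).le, hca⟩
    have h1 : X c < s := hrs ▸ hanti ⟨hr.1.le, hr.2.le⟩ hcI hcs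
    filter_upwards [hnhds, Ioi_mem_nhds h1] with t ht htc
    obtain ⟨hm, he⟩ := hρ t ht
    by_contra hle
    have := hanti.antitoneOn hcI ⟨hm.1.le, hm.2.le⟩ (not_lt.1 hle)
    rw [he] at this
    exact absurd htc (not_lt.2 this)

/-- The equation `u'' + (ν / r) u' + f u = 0` along a decreasing branch, in terms of the inverse
function `ρ` and of `p = |u'|` as functions of the value `s` of `u`. -/
structure LevelSystem (ν : ℝ) (f ρ p : ℝ → ℝ) (a b : ℝ) : Prop where
  hρ : ∀ s ∈ Icc a b, HasDerivAt ρ (-(p s)⁻¹) s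
  hp : ∀ s ∈ Icc a b, HasDerivAt p (ν / ρ s - f s / p s) s
  ρ_pos : ∀ s ∈ Icc a b, 0 < ρ s
  p_pos : ∀ s ∈ Icc a b, 0 < p s

lemma LevelSystem.mono {ν : ℝ} {f ρ p : ℝ → ℝ} {a b a' b' : ℝ} (h : LevelSystem ν f ρ p a b)
    (ha : a ≤ a') (hb : b' ≤ b) : LevelSystem ν f ρ p a' b' :=
  have hs : Icc a' b' ⊆ Icc a b := Icc_subset_Icc ha hb
  ⟨fun s h' => h.hρ s (hs h'), fun s h' => h.hp s (hs h'), fun s h' => h.ρ_pos s (hs h'),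
    fun s h' => h.p_pos s (hs h')⟩

section Comparison

variable {ν : ℝ} {f rA pA rB pB : ℝ → ℝ} {a b : ℝ}

lemma LevelSystem.hasDerivAt_gap (hA : LevelSystem ν f rA pA a b) (hB : LevelSystem ν f rB pB a b)
    {s : ℝ} (hs : s ∈ Icc a b) :
    HasDerivAt (fun s => rA s - rB s) ((pA s - pB s) / (pA s * pB s)) s := by
  have := (hA.hρ s hs).sub (hB.hρ s hs)
  have h1 := (hA.p_pos s hs).ne'
  have h2 := (hB.p_pos s hs).ne'
  refine this.congr_deriv ?_
  field_simp
  ring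

lemma LevelSystem.hasDerivAt_slope_gap (hA : LevelSystem ν f rA pA a b)
    (hB : LevelSystem ν f rB pB a b) {s : ℝ} (hs : s ∈ Icc a b) :
    HasDerivAt (fun s => pA s - pB s)
      (-(ν / (rA s * rB s)) * (rA s - rB s) + f s * (pA s - pB s) / (pA s * pB s)) s := by
  have := (hA.hp s hs).sub (hB.hp s hs)
  have h1 := (hA.p_pos s hs).ne'
  have h2 := (hB.p_pos s hs).ne'
  have h3 := (hA.ρ_pos s hs).ne'
  have h4 := (hB.ρ_pos s hs).ne'
  refine this.congr_deriv ?_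
  field_simp
  ring

lemma LevelSystem.slope_gap_nonneg (hν : 0 < ν) (hA : LevelSystem ν f rA pA a b)
    (hB : LevelSystem ν f rB pB a b) (hw : ∀ s ∈ Icc a b, rB s < rA s) (hb : 0 ≤ pA b - pB b) :
    ∀ s ∈ Icc a b, 0 ≤ pA s - pB s := by
  refine nonneg_of_deriv_neg_of_eq_zero (fun s hs => hA.hasDerivAt_slope_gap hB hs) hb ?_
  intro s hs h0
  rw [h0]
  have h3 := hA.ρ_pos s hs
  have h4 := hB.ρ_pos s hs
  have : 0 < ν / (rA s * rB s) * (rA s - rB s) :=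
    mul_pos (by positivity) (sub_pos.2 (hw s hs))
  simp only [mul_zero, zero_div, add_zero]
  linarith

/-- Near the top of a branch. -/
lemma LevelSystem.top_estimate (hν : 0 < ν) (hab : a ≤ b) (hA : LevelSystem ν f rA pA a b)
    (hB : LevelSystem ν f rB pB a b) (hw : ∀ s ∈ Icc a b, rB s < rA s) {C ε : ℝ} (hC : 0 < C)
    (hε : 0 < ε) (hf0 : ∀ s ∈ Icc a b, 0 ≤ f s) (hfC : ∀ s ∈ Icc a b, f s ≤ C)
    (hlog : C / ε ≤ Real.log (pB a) - Real.log (pB b)) :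
    -ε * (rA a - rB a) ≤ pA a - pB a := by
  by_contra! hlt
  have haI : a ∈ Icc a b := left_mem_Icc.2 hab
  have hwa := sub_pos.2 (hw a haI)
  set q₁ := -(pA a - pB a) with hq₁
  have hq₁pos : 0 < q₁ := by nlinarith
  have hq : ∀ s ∈ Icc a b, pA s - pB s < 0 := by
    intro s hs
    by_contra! h0
    have := LevelSystem.slope_gap_nonneg hν (hA.mono le_rfl hs.2) (hB.mono le_rfl hs.2)
      (fun t ht => hw t ⟨ht.1, ht.2.trans hs.2⟩) h0 a (left_mem_Icc.2 hs.1)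
    linarith
  have hq' : ∀ s ∈ Icc a b, pA s - pB s ≤ -q₁ := by
    intro s hs
    have hsub : ∀ t ∈ Icc a s, t ∈ Icc a b := fun t ht => ⟨ht.1, ht.2.trans hs.2⟩
    have := le_of_hasDerivAt_nonpos hs.1
      (fun t ht => hA.hasDerivAt_slope_gap hB (hsub t ht)) ?_
    · linarith
    intro t ht
    have htb := hsub t ht
    have h1 := hA.p_pos t htb
    have h2 := hB.p_pos t htb
    have h3 := hA.ρ_pos t htb
    have h4 := hB.ρ_pos t htb
    have h5 : 0 ≤ ν / (rA t * rB t) * (rA t - rB t) :=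
      mul_nonneg (by positivity) (sub_pos.2 (hw t htb)).le
    have h6 : f t * (pA t - pB t) / (pA t * pB t) ≤ 0 :=
      div_nonpos_of_nonpos_of_nonneg
        (mul_nonpos_of_nonneg_of_nonpos (hf0 t htb) (hq t htb).le) (by positivity)
    linarith
  have hfin := le_of_hasDerivAt_nonpos hab
    (h := fun s => (rA s - rB s) - q₁ / C * Real.log (pB s))
    (fun s hs => (hA.hasDerivAt_gap hB hs).sub
      (((hB.hp s hs).log (hB.p_pos s hs).ne').const_mul (q₁ / C))) ?_
  · have hwb := sub_pos.2 (hw b (right_mem_Icc.2 hab))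
    have h7 : q₁ / C * (C / ε) ≤ q₁ / C * (Real.log (pB a) - Real.log (pB b)) :=
      mul_le_mul_of_nonneg_left hlog (by positivity)
    have h8 : q₁ / C * (C / ε) = q₁ / ε := by field_simp
    have h9 : rA a - rB a < q₁ / ε := by
      rw [lt_div_iff₀ hε]; linarith
    linarith
  · intro s hs
    have h1 := hA.p_pos s hs
    have h2 := hB.p_pos s hs
    have h4 := hB.ρ_pos s hs
    have h10 : (pA s - pB s) / (pA s * pB s) ≤ -q₁ / (pB s * pB s) := by
      rw [div_le_div_iff₀ (by positivity) (by positivity)]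
      have := hq' s hs
      have h11 := hq s hs
      nlinarith [mul_pos h1 h2, mul_pos h2 h2, mul_pos hq₁pos h2,
        mul_nonneg (sub_nonneg.2 this) (mul_pos h2 h2).le,
        mul_nonneg (mul_pos hq₁pos h2).le (neg_pos.2 h11).le]
    have h12 : -(1 / (pB s * pB s)) * C ≤ (ν / rB s - f s / pB s) / pB s := by
      have e1 : (ν / rB s - f s / pB s) / pB s
          = ν / rB s / pB s - f s / (pB s * pB s) := by field_simp
      have e2 : f s / (pB s * pB s) ≤ C / (pB s * pB s) :=
        div_le_div_of_nonneg_right (hfC s hs) (by positivity)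
      have e3 : 0 ≤ ν / rB s / pB s := by positivity
      have e4 : -(1 / (pB s * pB s)) * C = -(C / (pB s * pB s)) := by ring
      linarith
    have h13 := mul_le_mul_of_nonneg_left h12 (by positivity : 0 ≤ q₁ / C)
    have h14 : q₁ / C * (-(1 / (pB s * pB s)) * C) = -q₁ / (pB s * pB s) := by field_simp
    linarith

/-- Away from the ends of a branch. -/
lemma LevelSystem.middle_estimate (hab : a < b) (hA : LevelSystem ν f rA pA a b)
    (hB : LevelSystem ν f rB pB a b) (hw : ∀ s ∈ Icc a b, rB s < rA s) {c C l : ℝ}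
    (hcr : ∀ s ∈ Icc a b, c ≤ ν / (rA s * rB s))
    (hC : ∀ s ∈ Icc a b, |f s| / (pA s * pB s) ≤ C) (hl : 0 < l) (hl2 : l ≤ c / 2)
    (hlC : l * (b - a) * C ≤ c / 4)
    (hb : -(l * (b - a) / 2) * (rA b - rB b) ≤ pA b - pB b) :
    l * (b - a) / 2 * (rA a - rB a) ≤ pA a - pB a := by
  have key := nonneg_of_deriv_neg_of_eq_zero (a := a) (b := b)
    (h := fun s => (pA s - pB s) - (-(l * (b - a) / 2) + l * (b - s)) * (rA s - rB s))
    (fun s hs => (hA.hasDerivAt_slope_gap hB hs).sub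
      (((((hasDerivAt_id s).const_sub b).const_mul l).const_add _).mul
        (hA.hasDerivAt_gap hB hs))) (by simp only [sub_self, mul_zero, add_zero]; linarith) ?_ a
          (left_mem_Icc.2 hab.le)
  · have : (-(l * (b - a) / 2) + l * (b - a)) = l * (b - a) / 2 := by ring
    rw [this] at key
    linarith
  · intro s hs h0
    have h1 := hA.p_pos s hs
    have h2 := hB.p_pos s hs
    have hws := sub_pos.2 (hw s hs)
    simp only [id] at h0 ⊢
    set g := -(l * (b - a) / 2) + l * (b - s) with hg
    set w := rA s - rB s with hwdef
    have hq : pA s - pB s = g * w := by linarith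
    rw [hq]
    have hgabs : |g| ≤ l * (b - a) := by
      rw [abs_le]
      constructor <;> nlinarith [hs.1, hs.2]
    have hPpos := mul_pos h1 h2
    have e1 : f s * (g * w) / (pA s * pB s) = (f s / (pA s * pB s) * g) * w := by ring
    have e2 : g * (g * w / (pA s * pB s)) = (g ^ 2 / (pA s * pB s)) * w := by ring
    have e3 : f s / (pA s * pB s) * g ≤ c / 4 := by
      have : |f s / (pA s * pB s) * g| ≤ C * (l * (b - a)) := by
        rw [abs_mul, abs_div, abs_of_pos hPpos]
        exact mul_le_mul (hC s hs) hgabs (abs_nonneg _)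
          ((by positivity : (0:ℝ) ≤ |f s| / (pA s * pB s)).trans (hC s hs))
      linarith [le_abs_self (f s / (pA s * pB s) * g)]
    have e4 : 0 ≤ g ^ 2 / (pA s * pB s) := by positivity
    have e5 := hcr s hs
    have e6 : -(ν / (rA s * rB s)) + f s / (pA s * pB s) * g + l - g ^ 2 / (pA s * pB s) < 0 := by
      linarith
    have e7 := mul_neg_of_neg_of_pos e6 hws
    rw [e1, e2]
    linarith

/-- Near the bottom of a branch. -/
lemma LevelSystem.bottom_contradiction (hν : 0 < ν) (hab : a ≤ b) (hA : LevelSystem ν f rA pA a b)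
    (hB : LevelSystem ν f rB pB a b) (hw : ∀ s ∈ Icc a b, rB s < rA s) {C ε : ℝ} (hC : 0 < C)
    (hε : 0 < ε) (hf0 : ∀ s ∈ Icc a b, f s ≤ 0)
    (hfC : ∀ s ∈ Icc a b, ν * pA s / rA s - f s ≤ C)
    (hlog : C / ε ≤ Real.log (pA b) - Real.log (pA a))
    (hb : ε * (rA b - rB b) ≤ pA b - pB b) : False := by
  have hbI : b ∈ Icc a b := right_mem_Icc.2 hab
  have hwb := sub_pos.2 (hw b hbI)
  set q₃ := pA b - pB b with hq₃
  have hq₃pos : 0 < q₃ := by nlinarith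
  have hq := LevelSystem.slope_gap_nonneg hν hA hB hw hq₃pos.le
  have hq' : ∀ s ∈ Icc a b, q₃ ≤ pA s - pB s := by
    intro s hs
    have hsub : ∀ t ∈ Icc s b, t ∈ Icc a b := fun t ht => ⟨hs.1.trans ht.1, ht.2⟩
    refine le_of_hasDerivAt_nonpos hs.2
      (fun t ht => hA.hasDerivAt_slope_gap hB (hsub t ht)) ?_
    intro t ht
    have htb := hsub t ht
    have h1 := hA.p_pos t htb
    have h2 := hB.p_pos t htb
    have h3 := hA.ρ_pos t htb
    have h4 := hB.ρ_pos t htb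
    have h5 : 0 ≤ ν / (rA t * rB t) * (rA t - rB t) :=
      mul_nonneg (by positivity) (sub_pos.2 (hw t htb)).le
    have h6 : f t * (pA t - pB t) / (pA t * pB t) ≤ 0 :=
      div_nonpos_of_nonpos_of_nonneg
        (mul_nonpos_of_nonpos_of_nonneg (hf0 t htb) (hq t htb)) (by positivity)
    linarith
  have hfin := le_of_hasDerivAt_nonpos hab
    (h := fun s => q₃ / C * Real.log (pA s) - (rA s - rB s))
    (fun s hs => (((hA.hp s hs).log (hA.p_pos s hs).ne').const_mul (q₃ / C)).sub
      (hA.hasDerivAt_gap hB hs)) ?_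
  · have hwa := sub_pos.2 (hw a (left_mem_Icc.2 hab))
    have h7 : q₃ / C * (C / ε) ≤ q₃ / C * (Real.log (pA b) - Real.log (pA a)) :=
      mul_le_mul_of_nonneg_left hlog (by positivity)
    have h8 : q₃ / C * (C / ε) = q₃ / ε := by field_simp
    have h9 : rA b - rB b ≤ q₃ / ε := by
      rw [le_div_iff₀ hε]; linarith
    linarith
  · intro s hs
    have h1 := hA.p_pos s hs
    have h2 := hB.p_pos s hs
    have h4 := hA.ρ_pos s hs
    have h10 : q₃ / (pA s * pA s) ≤ (pA s - pB s) / (pA s * pB s) := by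
      rw [div_le_div_iff₀ (by positivity) (by positivity)]
      have := hq' s hs
      have h11 := hq s hs
      nlinarith [mul_nonneg (sub_nonneg.2 this) (mul_pos h1 h1).le,
        mul_nonneg (mul_pos hq₃pos h1).le h11]
    have h12 : (ν / rA s - f s / pA s) / pA s ≤ 1 / (pA s * pA s) * C := by
      have e1 : (ν / rA s - f s / pA s) / pA s
          = 1 / (pA s * pA s) * (ν * pA s / rA s - f s) := by field_simp
      rw [e1]
      exact mul_le_mul_of_nonneg_left (hfC s hs) (by positivity)
    have h13 := mul_le_mul_of_nonneg_left h12 (by positivity : 0 ≤ q₃ / C)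
    have h14 : q₃ / C * (1 / (pA s * pA s) * C) = q₃ / (pA s * pA s) := by field_simp
    linarith

end Comparison

/-- Uniform bounds on a solution of the level system which stays close to a given one. -/
structure BranchBounds (ν : ℝ) (f ρ p : ℝ → ℝ) (s₄ s₃ s₁ s₀ R d e m : ℝ) : Prop where
  sys : LevelSystem ν f ρ p s₄ s₀
  le_R : ∀ s ∈ Icc s₃ s₁, ρ s ≤ R
  d_le : ∀ s ∈ Icc s₃ s₁, d ≤ p s
  top : p s₀ ≤ e
  bot : p s₄ ≤ e
  m_le : ∀ s ∈ Icc s₄ s₃, m ≤ ρ s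
  p_le : ∀ s ∈ Icc s₄ s₃, p s ≤ 1

lemma BranchBounds.not_separated {ν : ℝ} {f rA pA rB pB : ℝ → ℝ} {s₄ s₃ s₁ s₀ R d m C l : ℝ}
    (hν : 0 < ν) (h43 : s₄ ≤ s₃) (h31 : s₃ < s₁) (h10 : s₁ ≤ s₀) (hR : 0 < R) (hd : 0 < d)
    (hm : 0 < m) (hC : ∀ s ∈ Icc s₄ s₀, |f s| ≤ C) (hl : 0 < l) (hl2 : l ≤ ν / (R * R) / 2)
    (hlC : l * (s₁ - s₃) * (C / (d * d)) ≤ ν / (R * R) / 4)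
    (hf0 : ∀ s ∈ Icc s₁ s₀, 0 ≤ f s) (hf1 : ∀ s ∈ Icc s₄ s₃, f s ≤ 0)
    (hA : BranchBounds ν f rA pA s₄ s₃ s₁ s₀ R d
      (d * Real.exp (-((ν / m + C + 1) / (l * (s₁ - s₃) / 2)))) m)
    (hB : BranchBounds ν f rB pB s₄ s₃ s₁ s₀ R d
      (d * Real.exp (-((ν / m + C + 1) / (l * (s₁ - s₃) / 2)))) m) :
    ¬ ∀ s ∈ Icc s₄ s₀, rB s < rA s := by
  intro hw
  have hC0 : 0 ≤ C := (abs_nonneg _).trans (hC s₃ ⟨h43, h31.le.trans h10⟩)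
  have hC2 : 0 < ν / m + C + 1 := by positivity
  have hε : 0 < l * (s₁ - s₃) / 2 := by have := sub_pos.2 h31; positivity
  have hlogle : ∀ x y : ℝ, d ≤ x → 0 < y →
      y ≤ d * Real.exp (-((ν / m + C + 1) / (l * (s₁ - s₃) / 2))) →
      (ν / m + C + 1) / (l * (s₁ - s₃) / 2) ≤ Real.log x - Real.log y := by
    intro x y hx hy hye
    have h1 := Real.log_le_log hd hx
    have h2 := Real.log_le_log hy hye
    rw [Real.log_mul hd.ne' (Real.exp_pos _).ne', Real.log_exp] at h2
    linarith
  have htop : ∀ s ∈ Icc s₁ s₀, s ∈ Icc s₄ s₀ := fun s hs => ⟨by linarith [hs.1], hs.2⟩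
  have hmid : ∀ s ∈ Icc s₃ s₁, s ∈ Icc s₄ s₀ := fun s hs => ⟨h43.trans hs.1, hs.2.trans h10⟩
  have hbot : ∀ s ∈ Icc s₄ s₃, s ∈ Icc s₄ s₀ := fun s hs => ⟨hs.1, by linarith [hs.2]⟩
  have e1 := LevelSystem.top_estimate hν h10 (hA.sys.mono (by linarith) le_rfl)
    (hB.sys.mono (by linarith) le_rfl) (fun s hs => hw s (htop s hs)) hC2 hε hf0
    (fun s hs => by
      have := (le_abs_self _).trans (hC s (htop s hs))
      have : 0 < ν / m := by positivity
      linarith)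
    (hlogle _ _ (hB.d_le s₁ (right_mem_Icc.2 h31.le))
      (hB.sys.p_pos s₀ (right_mem_Icc.2 (by linarith))) hB.top)
  have e2 := LevelSystem.middle_estimate h31 (hA.sys.mono h43 h10) (hB.sys.mono h43 h10)
    (fun s hs => hw s (hmid s hs)) (c := ν / (R * R)) (C := C / (d * d)) (l := l)
    (fun s hs => by
      have a1 := hA.sys.ρ_pos s (hmid s hs)
      have a2 := hB.sys.ρ_pos s (hmid s hs)
      exact div_le_div_of_nonneg_left hν.le (by positivity)
        (mul_le_mul (hA.le_R s hs) (hB.le_R s hs) a2.le hR.le))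
    (fun s hs => div_le_div₀ hC0 (hC s (hmid s hs)) (by positivity)
      (mul_le_mul (hA.d_le s hs) (hB.d_le s hs) hd.le (hd.le.trans (hA.d_le s hs))))
    hl hl2 hlC (by linarith)
  refine LevelSystem.bottom_contradiction hν h43 (hA.sys.mono le_rfl (by linarith))
    (hB.sys.mono le_rfl (by linarith)) (fun s hs => hw s (hbot s hs)) hC2 hε hf1
    (fun s hs => ?_)
    (hlogle _ _ (hA.d_le s₃ (left_mem_Icc.2 h31.le))
      (hA.sys.p_pos s₄ (left_mem_Icc.2 (by linarith))) hA.bot) e2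
  have h1 := (neg_abs_le _).trans' (neg_le_neg (hC s (hbot s hs)))
  have h2 := hA.sys.p_pos s (hbot s hs)
  have h3 : ν * pA s / rA s ≤ ν / m := by
    apply div_le_div₀ hν.le _ hm (hA.m_le s hs)
    nlinarith [hA.p_le s hs]
  linarith

/-- `v` solves `v'' + (ν / r) v' + f v = 0` on `(0, ∞)`, with `v'` the derivative of `v`. -/
def IsRadial (ν : ℝ) (f v v' : ℝ → ℝ) : Prop :=
  ∀ r, 0 < r → HasDerivAt v (v' r) r ∧ HasDerivAt v' (-(ν / r * v' r) - f (v r)) r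

lemma IsRadial.exists_level {ν : ℝ} {f X X' : ℝ → ℝ} {a b : ℝ} (hX : IsRadial ν f X X')
    (ha : 0 < a) (hab : a < b) (hneg : ∀ r ∈ Icc a b, X' r < 0) :
    ∃ ρ : ℝ → ℝ, (∀ s ∈ Ioo (X b) (X a), ρ s ∈ Ioo a b ∧ X (ρ s) = s) ∧
      ∀ c d, X b < c → d < X a → LevelSystem ν f ρ (fun s => -X' (ρ s)) c d := by
  obtain ⟨ρ, hρ⟩ := exists_inverse_of_deriv_neg hab
    (fun r hr => (hX r (ha.trans_le hr.1)).1) hneg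
  refine ⟨ρ, fun s hs => ⟨(hρ s hs).1, (hρ s hs).2.1⟩, fun c d hc hd => ?_⟩
  have hsub : ∀ s ∈ Icc c d, s ∈ Ioo (X b) (X a) := fun s hs =>
    ⟨hc.trans_le hs.1, hs.2.trans_lt hd⟩
  have hn : ∀ s ∈ Icc c d, X' (ρ s) < 0 := fun s hs =>
    hneg _ (Ioo_subset_Icc_self (hρ s (hsub s hs)).1)
  have hpos : ∀ s ∈ Icc c d, 0 < ρ s := fun s hs => ha.trans (hρ s (hsub s hs)).1.1
  refine ⟨fun s hs => ?_, fun s hs => ?_, hpos, fun s hs => neg_pos.2 (hn s hs)⟩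
  · exact (hρ s (hsub s hs)).2.2.congr_deriv (by simp [inv_neg])
  · obtain ⟨-, h2, h3⟩ := hρ s (hsub s hs)
    have := ((hX _ (hpos s hs)).2.comp s h3).neg
    refine this.congr_deriv ?_
    have h5 := (hn s hs).ne
    have h6 := (hpos s hs).ne'
    rw [h2]
    field_simp
    ring

lemma exists_lt_mem_of_isOpen {I : Set ℝ} (hI : IsOpen I) {x : ℝ} (hx : x ∈ I) :
    ∃ y ∈ I, y < x := by
  obtain ⟨ε, hε, h⟩ := Metric.isOpen_iff.1 hI x hx
  exact ⟨x - ε / 2, h (by simp [abs_of_pos hε]; linarith), by linarith⟩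

lemma exists_gt_mem_of_isOpen {I : Set ℝ} (hI : IsOpen I) {x : ℝ} (hx : x ∈ I) :
    ∃ y ∈ I, x < y := by
  obtain ⟨ε, hε, h⟩ := Metric.isOpen_iff.1 hI x hx
  exact ⟨x + ε / 2, h (by simp [abs_of_pos hε]; linarith), by linarith⟩

lemma exists_le_neg_of_continuousOn {g : ℝ → ℝ} {a b : ℝ} (hab : a ≤ b)
    (hg : ContinuousOn g (Icc a b)) (hneg : ∀ r ∈ Icc a b, g r < 0) :
    ∃ d > 0, ∀ r ∈ Icc a b, g r ≤ -(2 * d) := by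
  obtain ⟨x, hx, hmax⟩ := isCompact_Icc.exists_isMaxOn (nonempty_Icc.2 hab) hg
  refine ⟨-g x / 2, by linarith [hneg x hx], fun r hr => ?_⟩
  have := hmax hr
  simp only [mem_ofPred_eq] at this
  linarith

/-- Two solutions close to a solution which decreases along a full branch, from a zero of its
derivative to a zero of its derivative, must cross. -/
lemma IsRadial.exists_crossing {ν : ℝ} {f v v' : ℝ → ℝ} {I : Set ℝ} (hν : 0 < ν)
    (hI : IsOpen I) (hIc : I.OrdConnected) (hIpos : ∀ r ∈ I, 0 < r)
    (hv : IsRadial ν f v v') (hneg : ∀ r ∈ I, v' r < 0)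
    (htop : ∀ e > 0, ∃ y ∈ I, ∀ r ∈ I, r ≤ y → -e ≤ v' r)
    (hbot : ∀ e > 0, ∃ y ∈ I, ∀ r ∈ I, y ≤ r → -e ≤ v' r)
    (hftop : ∃ y ∈ I, ∀ r ∈ I, r ≤ y → 0 ≤ f (v r))
    (hfbot : ∃ y ∈ I, ∀ r ∈ I, y ≤ r → f (v r) ≤ 0)
    {C : ℝ} (hC : ∀ r ∈ I, |f (v r)| ≤ C) :
    ∃ ra ∈ I, ∃ rb ∈ I, ∃ η > 0, ∀ A A' B B', IsRadial ν f A A' → IsRadial ν f B B' →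
      (∀ r ∈ Icc ra rb, |A r - v r| < η ∧ |A' r - v' r| < η) →
      (∀ r ∈ Icc ra rb, |B r - v r| < η ∧ |B' r - v' r| < η) →
      ∃ t ∈ Icc ra rb, A t = B t := by
  have hmaxI : ∀ x ∈ I, ∀ y ∈ I, max x y ∈ I := fun x hx y hy => by
    rcases max_choice x y with h | h <;> rw [h] <;> assumption
  have hminI : ∀ x ∈ I, ∀ y ∈ I, min x y ∈ I := fun x hx y hy => by
    rcases min_choice x y with h | h <;> rw [h] <;> assumption
  have hvcont : ∀ r ∈ I, ContinuousAt v r := fun r hr => (hv r (hIpos r hr)).1.continuousAt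
  have hv'cont : ∀ r ∈ I, ContinuousAt v' r := fun r hr => (hv r (hIpos r hr)).2.continuousAt
  have hanti : StrictAntiOn v I :=
    strictAntiOn_of_hasDerivWithinAt_neg hIc.convex
      (fun r hr => (hvcont r hr).continuousWithinAt)
      (fun r hr => (hv r (hIpos r (interior_subset hr))).1.hasDerivWithinAt)
      (fun r hr => hneg r (interior_subset hr))
  obtain ⟨r₁, hr₁, hf0⟩ := hftop
  obtain ⟨yb, hyb, hf1⟩ := hfbot
  obtain ⟨y₁, hy₁, hv1⟩ := hbot (1 / 2) (by norm_num)
  obtain ⟨m, hm, hmlt⟩ := exists_gt_mem_of_isOpen hI (hmaxI _ hr₁ _ (hmaxI _ hyb _ hy₁))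
  have hm1 : r₁ < m := (le_max_left _ _).trans_lt hmlt
  have hm2 : yb < m := ((le_max_left _ _).trans (le_max_right _ _)).trans_lt hmlt
  have hm3 : y₁ < m := ((le_max_right _ _).trans (le_max_right _ _)).trans_lt hmlt
  obtain ⟨r₃, hr₃, hmr₃⟩ := exists_gt_mem_of_isOpen hI hm
  obtain ⟨R, hR, hr₃R⟩ := exists_gt_mem_of_isOpen hI hr₃
  obtain ⟨a₁, ha₁, ha₁r₁⟩ := exists_lt_mem_of_isOpen hI hr₁
  obtain ⟨d, hd, hdv⟩ := exists_le_neg_of_continuousOn (by linarith : a₁ ≤ R)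
    (fun r hr => (hv'cont r (hIc.out ha₁ hR hr)).continuousWithinAt)
    (fun r hr => hneg r (hIc.out ha₁ hR hr))
  have hRpos := hIpos R hR
  have hmpos := hIpos m hm
  have h31 : v r₃ < v r₁ := hanti hr₁ hr₃ (hm1.trans hmr₃)
  have hgap := sub_pos.2 h31
  have hC0 : 0 ≤ C := (abs_nonneg _).trans (hC r₁ hr₁)
  obtain ⟨l, hl, hl2, hlC⟩ : ∃ l > 0, l ≤ ν / (R * R) / 2 ∧
      l * (v r₁ - v r₃) * (C / (d * d)) ≤ ν / (R * R) / 4 := by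
    set c := ν / (R * R) with hc
    have hcpos : 0 < c := by positivity
    set K := (v r₁ - v r₃) * (C / (d * d)) with hK
    have hK0 : 0 ≤ K := by positivity
    refine ⟨c / (4 * (K + 1)), by positivity, ?_, ?_⟩
    · rw [div_le_div_iff₀ (by positivity) (by norm_num)]
      nlinarith [mul_nonneg hcpos.le hK0]
    · rw [mul_assoc, ← hK, div_mul_eq_mul_div, div_le_div_iff₀ (by positivity) (by norm_num)]
      nlinarith [mul_nonneg hcpos.le hK0]
  set e := d * Real.exp (-((ν / m + C + 1) / (l * (v r₁ - v r₃) / 2))) with he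
  have hepos : 0 < e := by positivity
  obtain ⟨y₀, hy₀, hv0⟩ := htop (e / 2) (by positivity)
  obtain ⟨y₅, hy₅, hv5⟩ := hbot (e / 2) (by positivity)
  obtain ⟨a₂, ha₂, ha₂lt⟩ := exists_lt_mem_of_isOpen hI (hminI _ hy₀ _ ha₁)
  obtain ⟨b₂, hb₂, hb₂lt⟩ := exists_gt_mem_of_isOpen hI (hmaxI _ hy₅ _ hR)
  obtain ⟨ra, hra, hra₂⟩ := exists_lt_mem_of_isOpen hI ha₂
  obtain ⟨rb, hrb, hrb₂⟩ := exists_gt_mem_of_isOpen hI hb₂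
  have ha₂y : a₂ < y₀ := ha₂lt.trans_le (min_le_left _ _)
  have ha₂a : a₂ < a₁ := ha₂lt.trans_le (min_le_right _ _)
  have hb₂y : y₅ < b₂ := (le_max_left _ _).trans_lt hb₂lt
  have hb₂R : R < b₂ := (le_max_right _ _).trans_lt hb₂lt
  have hsub : ∀ r ∈ Icc ra rb, r ∈ I := fun r hr => hIc.out hra hrb hr
  obtain ⟨d', hd', hdv'⟩ := exists_le_neg_of_continuousOn (by linarith : ra ≤ rb)
    (fun r hr => (hv'cont r (hsub r hr)).continuousWithinAt)
    (fun r hr => hneg r (hsub r hr))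
  have g1 := hanti hra ha₂ hra₂
  have g2 := hanti ha₁ hr₁ ha₁r₁
  have g3 := hanti hm hr₃ hmr₃
  have g4 := hanti hr₃ hR hr₃R
  have g5 := hanti hb₂ hrb hrb₂
  have g6 := hanti ha₂ ha₁ ha₂a
  have g7 := hanti hR hb₂ hb₂R
  obtain ⟨s₀, hs₀, hs₀'⟩ := exists_between g1
  obtain ⟨s₄, hs₄, hs₄'⟩ := exists_between g5
  obtain ⟨η, hη, k1, k2, k3, k4, k5, k6, k7, k8, k9, k10, k11⟩ : ∃ η > 0, η ≤ d' ∧ η ≤ d ∧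
      η ≤ e / 2 ∧ η ≤ 1 / 2 ∧ η < v ra - s₀ ∧ η < s₀ - v a₂ ∧ η < v a₁ - v r₁ ∧ η < v r₃ - v R ∧
      η < v m - v r₃ ∧ η < v b₂ - s₄ ∧ η < s₄ - v rb := by
    have hev : ∀ x : ℝ, 0 < x → ∀ᶠ η in nhdsWithin (0:ℝ) (Ioi 0), η < x := fun x hx =>
      mem_nhdsWithin_of_mem_nhds (Iio_mem_nhds hx)
    have := (self_mem_nhdsWithin : Ioi (0:ℝ) ∈ nhdsWithin (0:ℝ) (Ioi 0))
    have hall : ∀ᶠ η in nhdsWithin (0:ℝ) (Ioi 0), η > 0 ∧ η ≤ d' ∧ η ≤ d ∧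
      η ≤ e / 2 ∧ η ≤ 1 / 2 ∧ η < v ra - s₀ ∧ η < s₀ - v a₂ ∧ η < v a₁ - v r₁ ∧ η < v r₃ - v R ∧
      η < v m - v r₃ ∧ η < v b₂ - s₄ ∧ η < s₄ - v rb := by
      filter_upwards [this, hev _ hd', hev _ hd, hev (e / 2) (by positivity),
        hev (1 / 2) (by norm_num), hev _ (sub_pos.2 hs₀'), hev _ (sub_pos.2 hs₀),
        hev _ (sub_pos.2 g2), hev _ (sub_pos.2 g4), hev _ (sub_pos.2 g3), hev _ (sub_pos.2 hs₄'),
        hev _ (sub_pos.2 hs₄)] with η p0 p1 p2 p3 p4 p5 p6 p7 p8 p9 p10 p11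
      exact ⟨p0, p1.le, p2.le, p3.le, p4.le, p5, p6, p7, p8, p9, p10, p11⟩
    obtain ⟨η, h⟩ := hall.exists
    exact ⟨η, h⟩
  refine ⟨ra, hra, rb, hrb, η, hη, fun A A' B B' hA hB hAc hBc => ?_⟩
  have facts : ∀ X X', IsRadial ν f X X' →
      (∀ r ∈ Icc ra rb, |X r - v r| < η ∧ |X' r - v' r| < η) →
      ∃ ρ p, BranchBounds ν f ρ p s₄ (v r₃) (v r₁) s₀ R d e m ∧
        ∀ s ∈ Icc s₄ s₀, ρ s ∈ Icc ra rb ∧ X (ρ s) = s := by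
    intro X X' hX hc
    have hXneg : ∀ r ∈ Icc ra rb, X' r < 0 := fun r hr => by
      have := (abs_lt.1 (hc r hr).2).2
      have := hdv' r hr
      linarith
    obtain ⟨ρ, hρ, hsys⟩ := hX.exists_level (hIpos ra hra) (by linarith) hXneg
    have hXanti : StrictAntiOn X (Icc ra rb) :=
      strictAntiOn_of_hasDerivWithinAt_neg (convex_Icc _ _)
        (fun r hr => (hX r (hIpos r (hsub r hr))).1.continuousAt.continuousWithinAt)
        (fun r hr => (hX r (hIpos r (hsub r (interior_subset hr)))).1.hasDerivWithinAt)
        (fun r hr => hXneg r (interior_subset hr))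
    have hval : ∀ r, ra ≤ r → r ≤ rb → v r - η < X r ∧ X r < v r + η := fun r h1 h2 => by
      have := abs_lt.1 (hc r ⟨h1, h2⟩).1
      constructor <;> linarith
    have hder : ∀ r, ra ≤ r → r ≤ rb → v' r - η < X' r ∧ X' r < v' r + η := fun r h1 h2 => by
      have := abs_lt.1 (hc r ⟨h1, h2⟩).2
      constructor <;> linarith
    have q1 := hval ra (by linarith) (by linarith)
    have q2 := hval a₂ (by linarith) (by linarith)
    have q3 := hval a₁ (by linarith) (by linarith)
    have q4 := hval m (by linarith) (by linarith)
    have q5 := hval R (by linarith) (by linarith)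
    have q6 := hval b₂ (by linarith) (by linarith)
    have q7 := hval rb (by linarith) (by linarith)
    have hmem : ∀ s ∈ Icc s₄ s₀, s ∈ Ioo (X rb) (X ra) := fun s hs =>
      ⟨by linarith [hs.1], by linarith [hs.2]⟩
    have hlt : ∀ s ∈ Icc s₄ s₀, ∀ x ∈ Icc ra rb, X x < s → ρ s ≤ x := by
      intro s hs x hx h
      obtain ⟨h1, h2⟩ := hρ s (hmem s hs)
      by_contra! h3
      have := hXanti hx (Ioo_subset_Icc_self h1) h3
      linarith
    have hgt : ∀ s ∈ Icc s₄ s₀, ∀ x ∈ Icc ra rb, s < X x → x ≤ ρ s := by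
      intro s hs x hx h
      obtain ⟨h1, h2⟩ := hρ s (hmem s hs)
      by_contra! h3
      have := hXanti (Ioo_subset_Icc_self h1) hx h3
      linarith
    have hρI : ∀ s ∈ Icc s₄ s₀, ρ s ∈ Icc ra rb := fun s hs =>
      Ioo_subset_Icc_self (hρ s (hmem s hs)).1
    have hmid : ∀ s ∈ Icc (v r₃) (v r₁), s ∈ Icc s₄ s₀ := fun s hs =>
      ⟨by linarith [hs.1], by linarith [hs.2]⟩
    have hbt : ∀ s ∈ Icc s₄ (v r₃), s ∈ Icc s₄ s₀ := fun s hs =>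
      ⟨hs.1, by linarith [hs.2]⟩
    have hR' : ∀ s ∈ Icc (v r₃) (v r₁), ρ s ≤ R := fun s hs =>
      hlt s (hmid s hs) R ⟨by linarith, by linarith⟩ (by linarith [hs.1])
    have hm' : ∀ s ∈ Icc s₄ (v r₃), m ≤ ρ s := fun s hs =>
      hgt s (hbt s hs) m ⟨by linarith, by linarith⟩ (by linarith [hs.2])
    have hs0I : s₀ ∈ Icc s₄ s₀ := ⟨by linarith, le_rfl⟩
    have hs4I : s₄ ∈ Icc s₄ s₀ := ⟨le_rfl, by linarith⟩
    refine ⟨ρ, _, ⟨hsys s₄ s₀ (by linarith) (by linarith), hR', fun s hs => ?_, ?_, ?_, hm',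
      fun s hs => ?_⟩, fun s hs => ⟨hρI s hs, (hρ s (hmem s hs)).2⟩⟩
    · have h1 := hgt s (hmid s hs) a₁ ⟨by linarith, by linarith⟩ (by linarith [hs.2])
      have h2 := hdv (ρ s) ⟨h1, hR' s hs⟩
      have h3 := hρI s (hmid s hs)
      have h4 := (hder (ρ s) h3.1 h3.2).2
      linarith
    · have h1 := hlt s₀ hs0I a₂ ⟨by linarith, by linarith⟩ (by linarith)
      have h3 := hρI s₀ hs0I
      have h2 := hv0 (ρ s₀) (hsub _ h3) (by linarith)
      have h4 := (hder (ρ s₀) h3.1 h3.2).1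
      linarith
    · have h1 := hgt s₄ hs4I b₂ ⟨by linarith, by linarith⟩ (by linarith)
      have h3 := hρI s₄ hs4I
      have h2 := hv5 (ρ s₄) (hsub _ h3) (by linarith)
      have h4 := (hder (ρ s₄) h3.1 h3.2).1
      linarith
    · have h3 := hρI s (hbt s hs)
      have h2 := hv1 (ρ s) (hsub _ h3) (by linarith [hm' s hs])
      have h4 := (hder (ρ s) h3.1 h3.2).1
      linarith
  obtain ⟨ρA, pA, bA, iA⟩ := facts A A' hA hAc
  obtain ⟨ρB, pB, bB, iB⟩ := facts B B' hB hBc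
  have hlev : ∀ s ∈ Icc s₄ s₀, ∃ r ∈ Icc ra rb, v r = s := by
    intro s hs
    obtain ⟨r, hr, h⟩ := intermediate_value_Icc' (by linarith : ra ≤ rb)
      (fun r hr => (hvcont r (hsub r hr)).continuousWithinAt)
      (⟨by linarith [hs.1], by linarith [hs.2]⟩ : s ∈ Icc (v rb) (v ra))
    exact ⟨r, hr, h⟩
  have fC : ∀ s ∈ Icc s₄ s₀, |f s| ≤ C := by
    intro s hs
    obtain ⟨r, hr, rfl⟩ := hlev s hs
    exact hC r (hsub r hr)
  have f0 : ∀ s ∈ Icc (v r₁) s₀, 0 ≤ f s := by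
    intro s hs
    obtain ⟨r, hr, rfl⟩ := hlev s ⟨by linarith [hs.1], hs.2⟩
    exact hf0 r (hsub r hr) ((hanti.le_iff_ge hr₁ (hsub r hr)).1 hs.1)
  have f1 : ∀ s ∈ Icc s₄ (v r₃), f s ≤ 0 := by
    intro s hs
    obtain ⟨r, hr, rfl⟩ := hlev s ⟨hs.1, by linarith [hs.2]⟩
    have := (hanti.le_iff_ge (hsub r hr) hr₃).1 hs.2
    exact hf1 r (hsub r hr) (by linarith)
  have n1 := BranchBounds.not_separated hν (by linarith) h31 (by linarith) hRpos hd hmpos fC hl hl2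
    hlC f0 f1 bA bB
  have n2 := BranchBounds.not_separated hν (by linarith) h31 (by linarith) hRpos hd hmpos fC hl hl2
    hlC f0 f1 bB bA
  push Not at n1 n2
  obtain ⟨x, hx, hx'⟩ := n1
  obtain ⟨y, hy, hy'⟩ := n2
  obtain ⟨s, hs, hs'⟩ := isPreconnected_Icc.intermediate_value₂ hx hy
    (fun s hs => (bA.sys.hρ s hs).continuousAt.continuousWithinAt)
    (fun s hs => (bB.sys.hρ s hs).continuousAt.continuousWithinAt) hx' hy'
  refine ⟨ρA s, (iA s hs).1, ?_⟩
  rw [(iA s hs).2, hs', (iB s hs).2]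

lemma Paper.Hf1.map_neg_one_pow_mul {f : ℝ → ℝ} {b β : ℝ} (h : Hf1 f b β) (i : ℕ) (s : ℝ) :
    f ((-1) ^ i * s) = (-1) ^ i * f s := by
  rcases neg_one_pow_eq_or ℝ i with hi | hi <;> simp [hi, h.1 s]

lemma Paper.Hf1.pos_of_beta_lt {f : ℝ → ℝ} {b β : ℝ} (h : Hf1 f b β) {s : ℝ} (hs : β < s) :
    0 < f s := h.2.2.2.2.1 s (h.2.2.2.1.trans hs)

lemma Paper.Hf1.Fint_nonpos {f : ℝ → ℝ} {b β : ℝ} (h : Hf1 f b β) (hf : Continuous f) {s : ℝ}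
    (hs0 : 0 ≤ s) (hs : s ≤ β) : Fint f s ≤ 0 := by
  obtain ⟨-, -, hb, hbβ, hpos, hneg, -, hβ⟩ := h
  rcases le_total s b with hsb | hsb
  · have : ∫ t in (0:ℝ)..s, f t ≤ ∫ _ in (0:ℝ)..s, (0:ℝ) :=
      intervalIntegral.integral_mono_on hs0 (hf.intervalIntegrable 0 s) (by simp)
        (fun x hx => hneg x ⟨hx.1, hx.2.trans hsb⟩)
    simpa [Fint] using this
  · have h1 : Fint f s + ∫ t in s..β, f t = Fint f β :=
      intervalIntegral.integral_add_adjacent_intervals (hf.intervalIntegrable _ _)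
        (hf.intervalIntegrable _ _)
    have h2 : 0 ≤ ∫ t in s..β, f t := by
      have : ∫ _ in s..β, (0:ℝ) ≤ ∫ t in s..β, f t :=
        intervalIntegral.integral_mono_on_of_le_Ioo hs (by simp)
        (hf.intervalIntegrable s β) (fun x hx => (hpos x (hsb.trans_lt hx.1)).le)
      simpa using this
    linarith

lemma Paper.Hf1.Fint_neg {f : ℝ → ℝ} {b β : ℝ} (h : Hf1 f b β) (s : ℝ) :
    Fint f (-s) = Fint f s := by
  have h1 := intervalIntegral.integral_comp_neg (a := 0) (b := s) f
  have h2 : (fun x => f (-x)) = fun x => -f x := funext h.1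
  rw [h2, intervalIntegral.integral_neg, neg_zero] at h1
  have h3 := intervalIntegral.integral_symm (μ := volume) (f := f) (-s) 0
  simp only [Fint]
  linarith

lemma Paper.Hf1.beta_lt_of_Fint_pos {f : ℝ → ℝ} {b β : ℝ} (h : Hf1 f b β) (hf : Continuous f)
    {i : ℕ} {s : ℝ} (hs : 0 ≤ (-1) ^ i * s) (hF : 0 < Fint f s) : β < (-1) ^ i * s := by
  by_contra! hle
  have h1 := h.Fint_nonpos hf hs hle
  rcases neg_one_pow_eq_or ℝ i with hi | hi
  · rw [hi, one_mul] at h1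
    linarith
  · rw [hi, neg_one_mul, h.Fint_neg] at h1
    linarith

lemma hasDerivAt_Fint {f : ℝ → ℝ} (hf : Continuous f) (s : ℝ) : HasDerivAt (Fint f) (f s) s :=
  (hf.integral_hasStrictDerivAt 0 s).hasDerivAt

/-- `v` solves the radial equation, `v` and `v'` being continuous up to `r = 0`. -/
structure IsRegularRadial (N : ℕ) (f v v' : ℝ → ℝ) : Prop where
  radial : IsRadial N f v v'
  cont : ContinuousOn v (Ici 0)
  cont' : ContinuousOn v' (Ici 0)

namespace IsRegularRadial

variable {N : ℕ} {f v v' : ℝ → ℝ}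

lemma neg_one_pow_mul {b β : ℝ} (h1 : Hf1 f b β) (h : IsRegularRadial N f v v') (i : ℕ) :
    IsRegularRadial N f (fun r => (-1) ^ i * v r) (fun r => (-1) ^ i * v' r) := by
  refine ⟨fun r hr => ⟨(h.radial r hr).1.const_mul _, ?_⟩, h.cont.const_mul _,
    h.cont'.const_mul _⟩
  refine ((h.radial r hr).2.const_mul _).congr_deriv ?_
  rw [h1.map_neg_one_pow_mul]
  ring

lemma hasDerivAt_weight (h : IsRegularRadial N f v v') {r : ℝ} (hr : 0 < r) :
    HasDerivAt (fun r => r ^ N * v' r) (-(r ^ N * f (v r))) r := by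
  refine ((hasDerivAt_pow N r).mul (h.radial r hr).2).congr_deriv ?_
  rcases N with _ | N
  · simp
  · simp only [Nat.add_sub_cancel, Nat.cast_add, Nat.cast_one, pow_succ]
    field_simp
    ring

lemma continuousOn_weight (h : IsRegularRadial N f v v') :
    ContinuousOn (fun r => r ^ N * v' r) (Ici 0) :=
  (continuous_pow N).continuousOn.mul h.cont'

lemma weight_lt (h : IsRegularRadial N f v v') {a b : ℝ} (ha : 0 ≤ a) (hab : a < b)
    (hf : ∀ r ∈ Ioo a b, 0 < f (v r)) : b ^ N * v' b < a ^ N * v' a := by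
  refine strictAntiOn_of_hasDerivWithinAt_neg (convex_Icc a b)
    (h.continuousOn_weight.mono fun r hr => ha.trans hr.1)
    (f' := fun r => -(r ^ N * f (v r))) ?_ ?_
    (left_mem_Icc.2 hab.le) (right_mem_Icc.2 hab.le) hab
  · intro r hr
    rw [interior_Icc] at hr
    exact (h.hasDerivAt_weight (ha.trans_lt hr.1)).hasDerivWithinAt
  · intro r hr
    rw [interior_Icc] at hr
    have h0 : 0 < r := ha.trans_lt hr.1
    have := hf r hr
    have : 0 < r ^ N * f (v r) := by positivity
    linarith

lemma weight_le (h : IsRegularRadial N f v v') {a b : ℝ} (ha : 0 ≤ a) (hab : a ≤ b)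
    (hf : ∀ r ∈ Ioo a b, f (v r) ≤ 0) : a ^ N * v' a ≤ b ^ N * v' b := by
  refine monotoneOn_of_hasDerivWithinAt_nonneg (convex_Icc a b)
    (h.continuousOn_weight.mono fun r hr => ha.trans hr.1)
    (f' := fun r => -(r ^ N * f (v r))) ?_ ?_
    (left_mem_Icc.2 hab) (right_mem_Icc.2 hab) hab
  · intro r hr
    rw [interior_Icc] at hr
    exact (h.hasDerivAt_weight (ha.trans_lt hr.1)).hasDerivWithinAt
  · intro r hr
    rw [interior_Icc] at hr
    have h0 : 0 < r := ha.trans_lt hr.1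
    have := mul_nonneg (pow_pos h0 N).le (neg_nonneg.2 (hf r hr))
    linarith

/-- After a critical point, `v` decreases as long as `f v` is positive. -/
lemma deriv_neg_of_critical (h : IsRegularRadial N f v v') {a b : ℝ} (ha : 0 ≤ a)
    (h0 : v' a = 0) (hf : ∀ r ∈ Ioo a b, 0 < f (v r)) : ∀ r ∈ Ioc a b, v' r < 0 := by
  intro r hr
  have := h.weight_lt ha hr.1 fun t ht => hf t ⟨ht.1, ht.2.trans_le hr.2⟩
  rw [h0, mul_zero] at this
  exact neg_of_mul_neg_right this (pow_pos (ha.trans_lt hr.1) N).le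

/-- Before a critical point, `v` increases as long as `f v` is positive. -/
lemma deriv_pos_of_critical (h : IsRegularRadial N f v v') {a b : ℝ} (ha : 0 ≤ a)
    (h0 : v' b = 0) (hf : ∀ r ∈ Ioo a b, 0 < f (v r)) : ∀ r ∈ Ioo a b, 0 < v' r := by
  intro r hr
  have := h.weight_lt (ha.trans hr.1.le) hr.2 fun t ht => hf t ⟨hr.1.trans ht.1, ht.2⟩
  rw [h0, mul_zero] at this
  exact pos_of_mul_pos_right this (pow_pos (ha.trans_lt hr.1) N).le

lemma hasDerivAt_energy (h : IsRegularRadial N f v v') (hf : Continuous f) {r : ℝ} (hr : 0 < r) :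
    HasDerivAt (fun r => v' r ^ 2 / 2 + Fint f (v r)) (-(N / r * v' r ^ 2)) r := by
  have h1 := (((h.radial r hr).2.pow 2).div_const 2).add
    ((hasDerivAt_Fint hf (v r)).comp r (h.radial r hr).1)
  refine h1.congr_deriv ?_
  push_cast
  ring

lemma continuousOn_energy (h : IsRegularRadial N f v v') (hf : Continuous f) :
    ContinuousOn (fun r => v' r ^ 2 / 2 + Fint f (v r)) (Ici 0) := by
  have hF : Continuous (Fint f) :=
    continuous_iff_continuousAt.2 fun s => (hasDerivAt_Fint hf s).continuousAt
  exact ((h.cont'.pow 2).div_const 2).add (hF.comp_continuousOn h.cont)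

lemma energy_antitoneOn (h : IsRegularRadial N f v v') (hf : Continuous f) :
    AntitoneOn (fun r => v' r ^ 2 / 2 + Fint f (v r)) (Ici 0) := by
  refine antitoneOn_of_hasDerivWithinAt_nonpos (convex_Ici 0) (h.continuousOn_energy hf)
    (f' := fun r => -(N / r * v' r ^ 2)) ?_ ?_
  · intro r hr
    rw [interior_Ici] at hr
    exact (h.hasDerivAt_energy hf hr).hasDerivWithinAt
  · intro r hr
    rw [interior_Ici, mem_Ioi] at hr
    have : 0 ≤ N / r * v' r ^ 2 := by positivity
    linarith

lemma energy_lt (h : IsRegularRadial N f v v') (hf : Continuous f) (hN : 0 < N) {a b : ℝ}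
    (ha : 0 ≤ a) (hab : a < b) (hv : ∀ r ∈ Ioo a b, v' r ≠ 0) :
    v' b ^ 2 / 2 + Fint f (v b) < v' a ^ 2 / 2 + Fint f (v a) := by
  refine strictAntiOn_of_hasDerivWithinAt_neg (convex_Icc a b)
    ((h.continuousOn_energy hf).mono fun r hr => ha.trans hr.1)
    (f' := fun r => -(N / r * v' r ^ 2)) ?_ ?_
    (left_mem_Icc.2 hab.le) (right_mem_Icc.2 hab.le) hab
  · intro r hr
    rw [interior_Icc] at hr
    exact (h.hasDerivAt_energy hf (ha.trans_lt hr.1)).hasDerivWithinAt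
  · intro r hr
    rw [interior_Icc] at hr
    have h0 : 0 < r := ha.trans_lt hr.1
    have := hv r hr
    have : 0 < N / r * v' r ^ 2 := by positivity
    linarith

/-- A positive decreasing solution tending to zero has derivative tending to zero. -/
lemma tendsto_deriv_zero {b β : ℝ} (h1 : Hf1 f b β) (h : IsRegularRadial N f v v') (hN : 0 < N)
    {T : ℝ} (hpos : ∀ r > T, 0 < v r) (hneg : ∀ r > T, v' r < 0)
    (hlim : Tendsto v atTop (nhds 0)) : Tendsto v' atTop (nhds 0) := by
  have hb : 0 < b := h1.2.2.1
  obtain ⟨x, hx⟩ := eventually_atTop.1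
    ((hlim.eventually (Iio_mem_nhds hb)).and ((eventually_gt_atTop T).and (eventually_ge_atTop 1)))
  have hx1 : 1 ≤ x := (hx x le_rfl).2.2
  set K := x ^ N * v' x with hK
  have hlow : ∀ r ≥ x, K / r ≤ v' r := by
    intro r hr
    have hr1 : 1 ≤ r := hx1.trans hr
    have h2 := h.weight_le (by linarith) hr fun t ht =>
      h1.2.2.2.2.2.1 (v t) ⟨(hpos t (hx t ht.1.le).2.1).le, (hx t ht.1.le).1.le⟩
    have h3 := hneg r (hx r hr).2.1
    have h4 : r ≤ r ^ N := le_self_pow₀ hr1 hN.ne'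
    rw [div_le_iff₀ (by linarith)]
    nlinarith
  refine tendsto_of_tendsto_of_tendsto_of_le_of_le' (tendsto_const_nhds.div_atTop tendsto_id)
    tendsto_const_nhds (eventually_atTop.2 ⟨x, hlow⟩)
    (eventually_atTop.2 ⟨x, fun r hr => (hneg r (hx r hr).2.1).le⟩)

end IsRegularRadial

lemma Paper.Family.isRegularRadial {N : ℕ} {f : ℝ → ℝ} {u : ℝ → ℝ → ℝ} (hu : Family (N + 1) f u)
    {α : ℝ} (hα : 0 < α) : IsRegularRadial N f (u α) (deriv (u α)) := by
  obtain ⟨-, -, hc, hd, he⟩ := hu.1 α hα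
  refine ⟨fun r hr => ⟨(hd r hr).1.hasDerivAt, ?_⟩, hc, ?_⟩
  · refine (hd r hr).2.hasDerivAt.congr_deriv ?_
    have := he r hr
    push_cast at this
    rw [add_sub_cancel_right] at this
    linarith
  · exact hu.2.2.comp (f := fun r => (α, r)) (by fun_prop) (fun r hr => ⟨hα, hr⟩)

/-- Extension of continuity on `(0, ∞) × [0, ∞)` by a constant in the second variable. -/
lemma continuousAt_comp_max {g : ℝ × ℝ → ℝ} (hg : ContinuousOn g (Ioi 0 ×ˢ Ici 0)) {α : ℝ}
    (hα : 0 < α) (r : ℝ) : ContinuousAt (fun p : ℝ × ℝ => g (p.1, max p.2 0)) (α, r) := by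
  have h1 : ContinuousOn (fun p : ℝ × ℝ => g (p.1, max p.2 0)) (Ioi 0 ×ˢ univ) :=
    hg.comp (by fun_prop) fun p hp => ⟨hp.1, mem_Ici.2 (le_max_right _ _)⟩
  exact h1.continuousAt ((isOpen_Ioi.prod isOpen_univ).mem_nhds ⟨hα, mem_univ _⟩)

lemma eventually_forall_dist_lt {g : ℝ × ℝ → ℝ} (hg : ContinuousOn g (Ioi 0 ×ˢ Ici 0)) {α : ℝ}
    (hα : 0 < α) {K : Set ℝ} (hK : IsCompact K) (hK0 : K ⊆ Ici 0) {η : ℝ} (hη : 0 < η) :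
    ∀ᶠ a in nhds α, ∀ r ∈ K, |g (a, r) - g (α, r)| < η := by
  have key : ∀ᶠ a in nhds α, ∀ r ∈ K, |g (a, max r 0) - g (α, max r 0)| < η := by
    refine hK.eventually_forall_of_forall_eventually fun r _ => ?_
    have h1 := continuousAt_comp_max hg hα r
    have h2 : ContinuousAt (fun p : ℝ × ℝ => g (α, max p.2 0)) (α, r) :=
      ContinuousAt.comp' (f := fun p : ℝ × ℝ => (α, p.2))
        (g := fun p : ℝ × ℝ => g (p.1, max p.2 0)) h1 (by fun_prop)
    have h3 := (h1.sub h2).abs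
    exact h3.eventually (Iio_mem_nhds (by simpa using hη))
  filter_upwards [key] with a ha r hr
  have := ha r hr
  rwa [max_eq_left (hK0 hr)] at this

lemma exists_eventually_lt {g : ℝ × ℝ → ℝ} (hg : ContinuousOn g (Ioi 0 ×ˢ Ici 0)) {α T c : ℝ}
    (hα : 0 < α) (hT : 0 ≤ T) (hc : c < g (α, T)) :
    ∃ ε > 0, ∀ᶠ a in nhds α, ∀ r, 0 ≤ r → |r - T| ≤ ε → c < g (a, r) := by
  have h1 := continuousAt_comp_max hg hα T
  have h2 := h1.eventually (Ioi_mem_nhds (by simpa [max_eq_left hT] using hc))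
  rw [nhds_prod_eq, eventually_prod_iff] at h2
  obtain ⟨pa, hpa, pb, hpb, h3⟩ := h2
  obtain ⟨ε, hε, h4⟩ := Metric.eventually_nhds_iff.1 hpb
  refine ⟨ε / 2, by positivity, hpa.mono fun a ha r hr hrT => ?_⟩
  have := h3 ha (h4 (y := r) (by rw [Real.dist_eq]; linarith))
  simpa [max_eq_left hr] using this

lemma exists_zero_of_neg_of_nonneg {g : ℝ → ℝ} {a b : ℝ} (hab : a ≤ b)
    (hg : ContinuousOn g (Icc a b)) (ha : g a < 0) (hb : 0 ≤ g b) : ∃ x ∈ Ioc a b, g x = 0 := by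
  obtain ⟨x, hx, h0⟩ := intermediate_value_Icc hab hg ⟨ha.le, hb⟩
  refine ⟨x, ⟨lt_of_le_of_ne hx.1 ?_, hx.2⟩, h0⟩
  rintro rfl
  linarith

lemma tendsto_nhdsGT_of_continuousOn_Ici {g : ℝ → ℝ} (hg : ContinuousOn g (Ici 0)) {T : ℝ}
    (hT : 0 ≤ T) : Tendsto g (nhdsWithin T (Ioi T)) (nhds (g T)) :=
  (hg T hT).tendsto.mono_left (nhdsWithin_mono _ fun _ hr => hT.trans (le_of_lt hr))

lemma tendsto_nhdsLT_of_continuousOn_Ici {g : ℝ → ℝ} (hg : ContinuousOn g (Ici 0)) {T : ℝ}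
    (hT : 0 < T) : Tendsto g (nhdsWithin T (Iio T)) (nhds (g T)) :=
  (hg.continuousAt (Ici_mem_nhds hT)).tendsto.mono_left nhdsWithin_le_nhds

lemma exists_forall_le_of_eventually_nhdsGT {q : ℝ → Prop} {T p : ℝ}
    (hq : ∀ᶠ r in nhdsWithin T (Ioi T), q r) (hp : T < p) :
    ∃ y ∈ Ioo T p, ∀ r, T < r → r ≤ y → q r := by
  obtain ⟨z, hz, h⟩ := mem_nhdsGT_iff_exists_Ioc_subset.1 hq
  have hz : T < z := hz
  obtain ⟨y, hy⟩ := exists_between (lt_min hz hp)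
  exact ⟨y, ⟨hy.1, hy.2.trans_le (min_le_right _ _)⟩, fun r hr hry =>
    h ⟨hr, hry.trans (hy.2.le.trans (min_le_left _ _))⟩⟩

lemma exists_forall_ge_of_eventually_nhdsLT {q : ℝ → Prop} {T p : ℝ}
    (hq : ∀ᶠ r in nhdsWithin T (Iio T), q r) (hp : p < T) :
    ∃ y ∈ Ioo p T, ∀ r, r < T → y ≤ r → q r := by
  obtain ⟨z, hz, h⟩ := mem_nhdsLT_iff_exists_Ico_subset.1 hq
  have hz : z < T := hz
  obtain ⟨y, hy⟩ := exists_between (max_lt hz hp)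
  exact ⟨y, ⟨(le_max_right _ _).trans_lt hy.1, hy.2⟩, fun r hr hry =>
    h ⟨(le_max_left _ _).trans (hy.1.le.trans hry), hr⟩⟩

lemma not_isLocalMin_of_deriv_neg {v : ℝ → ℝ} {T q : ℝ} (hTq : T < q)
    (hc : ContinuousOn v (Icc T q)) (hneg : ∀ r ∈ Ioo T q, deriv v r < 0) : ¬IsLocalMin v T := by
  intro hmin
  have hanti : StrictAntiOn v (Icc T q) :=
    strictAntiOn_of_deriv_neg (convex_Icc T q) hc (by rwa [interior_Icc])
  obtain ⟨y, hy, h⟩ := exists_forall_le_of_eventually_nhdsGT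
    (Filter.Eventually.filter_mono nhdsWithin_le_nhds hmin) hTq
  exact (hanti ⟨le_rfl, hTq.le⟩ ⟨hy.1.le, hy.2.le⟩ hy.1).not_ge (h y hy.1 le_rfl)

/-- The zeros of a function on `[t 0, A]` when it vanishes at `t 0 < ⋯ < t m` and nowhere else. -/
lemma zeros_eq_image {t : ℕ → ℝ} {g : ℝ → ℝ} {m : ℕ} {A : ℝ} (hlt : ∀ i < m, t i < t (i + 1))
    (hA : t m < A) (hz : ∀ i ≤ m, g (t i) = 0)
    (hne : ∀ i < m, ∀ r ∈ Ioo (t i) (t (i + 1)), g r ≠ 0) (hne' : ∀ r ∈ Ioc (t m) A, g r ≠ 0) :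
    {r | r ∈ Icc (t 0) A ∧ g r = 0} = t '' (Finset.range (m + 1) : Set ℕ) ∧
      InjOn t (Finset.range (m + 1) : Set ℕ) := by
  have hmono : ∀ i j, i < j → j ≤ m → t i < t j := by
    intro i j hij
    induction j, hij using Nat.le_induction with
    | base => exact fun h => hlt i h
    | succ j hj ih => exact fun h => (ih (by omega)).trans (hlt j h)
  have hcover : ∀ j ≤ m, ∀ r ∈ Icc (t 0) (t j), g r = 0 → ∃ i ≤ j, t i = r := by
    intro j
    induction j with
    | zero => exact fun _ r hr _ => ⟨0, le_rfl, le_antisymm hr.1 hr.2⟩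
    | succ j ih =>
      intro hj r hr h0
      rcases le_or_gt r (t j) with h | h
      · obtain ⟨i, hi, h⟩ := ih (by omega) r ⟨hr.1, h⟩ h0
        exact ⟨i, by omega, h⟩
      · refine ⟨j + 1, le_rfl, ?_⟩
        by_contra hne2
        exact hne j hj r ⟨h, lt_of_le_of_ne hr.2 (Ne.symm hne2)⟩ h0
  constructor
  · ext r
    simp only [mem_image, Finset.coe_range, mem_Iio]
    constructor
    · rintro ⟨hr, h0⟩
      rcases le_or_gt r (t m) with h | h
      · obtain ⟨i, hi, h⟩ := hcover m le_rfl r ⟨hr.1, h⟩ h0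
        exact ⟨i, by omega, h⟩
      · exact absurd h0 (hne' r ⟨h, hr.2⟩)
    · rintro ⟨i, hi, rfl⟩
      refine ⟨⟨?_, ?_⟩, hz i (by omega)⟩
      · rcases Nat.eq_zero_or_pos i with rfl | h
        · exact le_rfl
        · exact (hmono 0 i h (by omega)).le
      · rcases Nat.lt_or_ge i m with h | h
        · exact (hmono i m h le_rfl).le.trans hA.le
        · rw [show i = m by omega]
          exact hA.le
  · intro i hi j hj hij
    simp only [Finset.coe_range, mem_Iio] at hi hj
    rcases lt_trichotomy i j with h | h | h
    · exact absurd hij (hmono i j h (by omega)).ne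
    · exact h
    · exact absurd hij (hmono j i h (by omega)).ne'

lemma eventually_forall_lt_of_isCompact {g : ℝ × ℝ → ℝ} (hg : ContinuousOn g (Ioi 0 ×ˢ Ici 0))
    {α c : ℝ} (hα : 0 < α) {K : Set ℝ} (hK : IsCompact K) (hK0 : K ⊆ Ici 0)
    (hc : ∀ r ∈ K, g (α, r) < c) : ∀ᶠ a in nhds α, ∀ r ∈ K, g (a, r) < c := by
  have key : ∀ᶠ a in nhds α, ∀ r ∈ K, g (a, max r 0) < c := by
    refine hK.eventually_forall_of_forall_eventually fun r hr => ?_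
    have h1 := continuousAt_comp_max hg hα r
    exact h1.eventually (Iio_mem_nhds (by simpa [max_eq_left (mem_Ici.1 (hK0 hr))] using hc r hr))
  filter_upwards [key] with a ha r hr
  have := ha r hr
  rwa [max_eq_left (hK0 hr)] at this

lemma mem_ZsetK_succ {u : ℝ → ℝ → ℝ} {i : ℕ} {α r : ℝ} :
    r ∈ ZsetK u (i + 1) α ↔ Tk u i α < r ∧ ∀ s ∈ Ioo (Tk u i α) r,
      0 < (-1) ^ i * u α s ∧ (-1) ^ i * deriv (u α) s < 0 := by
  simp only [ZsetK, ZsetAux, Nat.add_sub_cancel, mem_ofPred_eq, pow_succ]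
  simp

lemma mem_Nk {u : ℝ → ℝ → ℝ} {α : ℝ} {m : ℕ} (h : α ∈ Nk u m) :
    0 < α ∧ (∀ i < m, uAtZ u (i + 1) α = 0 ∧ 0 < (-1) ^ (i + 1) * duAtZ u (i + 1) α) ∧
      ∀ i, i + 1 < m → ¬Ftil u (i + 2) α := by
  induction m with
  | zero => exact ⟨h, by simp, by simp⟩
  | succ m ih =>
    rcases m with _ | m
    · obtain ⟨h0, h1, h2⟩ := h
      refine ⟨h0, fun i hi => ?_, by simp⟩
      obtain rfl : i = 0 := by omega
      exact ⟨h1, by simpa using h2⟩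
    · obtain ⟨h0, h1, h2, h3⟩ := h
      obtain ⟨g0, g1, g2⟩ := ih h0
      refine ⟨g0, fun i hi => ?_, fun i hi => ?_⟩
      · rcases Nat.lt_or_ge i (m + 1) with hlt | hge
        · exact g1 i hlt
        · obtain rfl : i = m + 1 := by omega
          exact ⟨h2, h3⟩
      · rcases Nat.lt_or_ge (i + 1) (m + 1) with hlt | hge
        · exact g2 i hlt
        · obtain rfl : i = m := by omega
          exact h1

lemma mem_Gk_succ {u : ℝ → ℝ → ℝ} {α : ℝ} {m : ℕ} (h : α ∈ Gk u (m + 1)) :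
    0 < α ∧ (∀ i < m, uAtZ u (i + 1) α = 0 ∧ 0 < (-1) ^ (i + 1) * duAtZ u (i + 1) α ∧
      ¬Ftil u (i + 2) α) ∧ uAtZ u (m + 1) α = 0 ∧ duAtZ u (m + 1) α = 0 := by
  rcases m with _ | m
  · exact ⟨h.1, by simp, h.2.1, h.2.2⟩
  · obtain ⟨h0, h1, h2, h3⟩ := h
    obtain ⟨g0, g1, g2⟩ := mem_Nk h0
    refine ⟨g0, fun i hi => ⟨(g1 i hi).1, (g1 i hi).2, ?_⟩, h2, h3⟩
    rcases Nat.lt_or_ge (i + 1) (m + 1) with hlt | hge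
    · exact g2 i hlt
    · obtain rfl : i = m := by omega
      exact h1

lemma neg_one_pow_mul_eq_zero {i : ℕ} {x : ℝ} : (-1) ^ i * x = 0 ↔ x = 0 := by
  rcases neg_one_pow_eq_or ℝ i with h | h <;> simp [h]

section Family

variable {N : ℕ} {f : ℝ → ℝ} {b β : ℝ} {u : ℝ → ℝ → ℝ}

/-- The monotone branch of `u` starting at `T_i`, when `u` vanishes at its end `Z_{i+1}`. -/
lemma branch_cases (h1 : Hf1 f b β) (hN : 0 < N) (hu : Family (N + 1) f u) {α : ℝ} (hα : 0 < α)
    {i : ℕ} (hT : 0 ≤ Tk u i α) (hz : uAtZ u (i + 1) α = 0) :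
    (Tk u i α < Zk u (i + 1) α ∧ (∀ r ∈ Ioo (Tk u i α) (Zk u (i + 1) α),
        0 < (-1) ^ i * u α r ∧ (-1) ^ i * deriv (u α) r < 0) ∧ u α (Zk u (i + 1) α) = 0 ∧
        duAtZ u (i + 1) α = deriv (u α) (Zk u (i + 1) α)) ∨
    (¬BddAbove (ZsetK u (i + 1) α) ∧
      (∀ r > Tk u i α, 0 < (-1) ^ i * u α r ∧ (-1) ^ i * deriv (u α) r < 0) ∧
      Tendsto (u α) atTop (nhds 0) ∧ Tendsto (deriv (u α)) atTop (nhds 0) ∧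
      duAtZ u (i + 1) α = 0) := by
  have hZ : Zk u (i + 1) α = sSup (ZsetK u (i + 1) α) := rfl
  by_cases hbdd : BddAbove (ZsetK u (i + 1) α)
  · left
    rw [uAtZ, if_pos hbdd] at hz
    rw [duAtZ, if_pos hbdd]
    have hne : (ZsetK u (i + 1) α).Nonempty := by
      by_contra hemp
      rw [not_nonempty_iff_eq_empty] at hemp
      rw [hZ, hemp, Real.sSup_empty, (hu.1 α hα).1] at hz
      exact hα.ne' hz
    obtain ⟨x, hx⟩ := hne
    refine ⟨(mem_ZsetK_succ.1 hx).1.trans_le (le_csSup hbdd hx), fun r hr => ?_, hz, rfl⟩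
    obtain ⟨y, hy, hry⟩ := exists_lt_of_lt_csSup ⟨x, hx⟩ hr.2
    exact (mem_ZsetK_succ.1 hy).2 r ⟨hr.1, hry⟩
  · right
    rw [uAtZ, if_neg hbdd] at hz
    have hsign : ∀ r > Tk u i α, 0 < (-1) ^ i * u α r ∧ (-1) ^ i * deriv (u α) r < 0 := by
      intro r hr
      obtain ⟨y, hy, hry⟩ := not_bddAbove_iff.1 hbdd r
      exact (mem_ZsetK_succ.1 hy).2 r ⟨hr, hry⟩
    have hw := (hu.isRegularRadial hα).neg_one_pow_mul h1 i
    have hanti : StrictAntiOn (fun r => (-1) ^ i * u α r) (Ioi (Tk u i α)) := by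
      refine strictAntiOn_of_hasDerivWithinAt_neg (convex_Ioi _)
        (hw.cont.mono fun r hr => hT.trans (le_of_lt hr))
        (f' := fun r => (-1) ^ i * deriv (u α) r) ?_ ?_ <;> rw [interior_Ioi]
      · exact fun r hr => (hw.radial r (hT.trans_lt hr)).1.hasDerivWithinAt
      · exact fun r hr => (hsign r hr).2
    have hw0 : ∃ l, Tendsto (fun r => (-1) ^ i * u α r) atTop (nhds l) := by
      set g : ℝ → ℝ := fun r => (-1) ^ i * u α (max r (Tk u i α + 1)) with hg
      have hganti : Antitone g := fun x y hxy => hanti.antitoneOn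
        (mem_Ioi.2 (lt_of_lt_of_le (by linarith) (le_max_right _ _)))
        (mem_Ioi.2 (lt_of_lt_of_le (by linarith) (le_max_right _ _))) (max_le_max_right _ hxy)
      have hgb : BddBelow (range g) := by
        refine ⟨0, ?_⟩
        rintro _ ⟨r, rfl⟩
        exact (hsign _ (lt_of_lt_of_le (by linarith) (le_max_right _ _))).1.le
      refine ⟨_, (tendsto_atTop_ciInf hganti hgb).congr' ?_⟩
      filter_upwards [eventually_ge_atTop (Tk u i α + 1)] with r hr
      simp only [hg, max_eq_left hr]
    obtain ⟨l, hl⟩ := hw0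
    have hmul : ∀ x : ℝ, (-1) ^ i * ((-1) ^ i * x) = x := by
      intro x
      rcases neg_one_pow_eq_or ℝ i with h | h <;> simp [h]
    have hlim : Tendsto (u α) atTop (nhds 0) := by
      have := hl.const_mul ((-1) ^ i)
      simp only [hmul] at this
      rw [this.limUnder_eq] at hz
      rwa [hz] at this
    have hlim' : Tendsto (deriv (u α)) atTop (nhds 0) := by
      have := (hw.tendsto_deriv_zero h1 hN (fun r hr => (hsign r hr).1)
        (fun r hr => (hsign r hr).2) (by simpa using hlim.const_mul ((-1) ^ i))).const_mul
          ((-1) ^ i)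
      simpa only [hmul, mul_zero] using this
    refine ⟨hbdd, hsign, hlim, hlim', ?_⟩
    rw [duAtZ, if_neg hbdd, hlim'.limUnder_eq]

lemma nonneg_of_uAtZ (h1 : Hf1 f b β) (hN : 0 < N) (hu : Family (N + 1) f u) {α : ℝ} (hα : 0 < α)
    {i : ℕ} (hT : 0 ≤ Tk u i α) (hz : uAtZ u (i + 1) α = 0) :
    0 ≤ (-1) ^ i * u α (Tk u i α) := by
  have hw := (hu.isRegularRadial hα).neg_one_pow_mul h1 i
  refine ge_of_tendsto (tendsto_nhdsGT_of_continuousOn_Ici hw.cont hT) ?_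
  rcases branch_cases h1 hN hu hα hT hz with ⟨hTZ, hs, -⟩ | ⟨-, hs, -⟩
  · filter_upwards [Ioo_mem_nhdsGT hTZ] with r hr using (hs r hr).1.le
  · filter_upwards [self_mem_nhdsWithin] with r hr using (hs r hr).1.le

/-- Between consecutive extremal points `u` is strictly monotone. -/
lemma next_critical (h1 : Hf1 f b β) (hN : 0 < N) (hu : Family (N + 1) f u) {α : ℝ} (hα : 0 < α)
    {i : ℕ} (hT : 0 ≤ Tk u i α) (hz : uAtZ u (i + 1) α = 0)
    (hdz : 0 < (-1) ^ (i + 1) * duAtZ u (i + 1) α) (hF : ¬Ftil u (i + 2) α) :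
    Tk u i α < Tk u (i + 1) α ∧ deriv (u α) (Tk u (i + 1) α) = 0 ∧
      ∀ r ∈ Ioo (Tk u i α) (Tk u (i + 1) α), (-1) ^ i * deriv (u α) r < 0 := by
  rcases branch_cases h1 hN hu hα hT hz with ⟨hTZ, hs, -, hd⟩ | ⟨-, -, -, -, hd⟩
  swap
  · simp [hd] at hdz
  set Z := Zk u (i + 1) α with hZdef
  set S := {r | Z < r ∧ deriv (u α) r = 0} with hS
  have hTS : Tk u (i + 1) α = sInf S := rfl
  have hw := (hu.isRegularRadial hα).neg_one_pow_mul h1 i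
  have hZ0 : 0 ≤ Z := hT.trans hTZ.le
  have hdZ : (-1) ^ i * deriv (u α) Z < 0 := by
    rw [hd, pow_succ] at hdz
    linarith
  have hzero : ∀ r ≥ Z, 0 ≤ (-1) ^ i * deriv (u α) r → ∃ s ∈ S, s ≤ r := by
    intro r hr h0
    obtain ⟨x, hx, hx0⟩ := exists_zero_of_neg_of_nonneg hr
      (hw.cont'.mono fun t ht => hZ0.trans ht.1) hdZ h0
    exact ⟨x, ⟨hx.1, neg_one_pow_mul_eq_zero.1 hx0⟩, hx.2⟩
  have hbd : BddBelow S := ⟨Z, fun r hr => hr.1.le⟩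
  have hne : S.Nonempty := by
    simp only [Ftil, not_forall, not_lt] at hF
    obtain ⟨r, hr, h0⟩ := hF
    rw [pow_add] at h0
    norm_num at h0
    obtain ⟨s, hs, -⟩ := hzero r (le_of_lt hr) h0
    exact ⟨s, hs⟩
  have hcl : sInf S ∈ Ici Z ∩ deriv (u α) ⁻¹' {0} := by
    have hclosed : IsClosed (Ici Z ∩ deriv (u α) ⁻¹' {0}) :=
      ((hu.isRegularRadial hα).cont'.mono (Ici_subset_Ici.2 hZ0)).preimage_isClosed_of_isClosed
        isClosed_Ici isClosed_singleton
    have hsub : S ⊆ Ici Z ∩ deriv (u α) ⁻¹' {0} := fun r hr => ⟨le_of_lt hr.1, hr.2⟩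
    exact closure_minimal hsub hclosed (csInf_mem_closure hne hbd)
  have hlt : Z < sInf S := by
    refine lt_of_le_of_ne hcl.1 fun h => ?_
    have := hcl.2
    rw [← h, mem_preimage, mem_singleton_iff] at this
    simp [this] at hdZ
  rw [hTS]
  refine ⟨hTZ.trans hlt, hcl.2, fun r hr => ?_⟩
  rcases lt_or_ge r Z with h | h
  · exact (hs r ⟨hr.1, h⟩).2
  · by_contra! h0
    obtain ⟨s, hs, hsr⟩ := hzero r h h0
    exact (csInf_le hbd hs).not_gt (hsr.trans_lt hr.2)

/-- A monotone branch that crosses zero and ends at a critical point determines `T_{i+1}`. -/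
lemma Tk_succ_eq (h1 : Hf1 f b β) (hu : Family (N + 1) f u) {α τ : ℝ} (hα : 0 < α)
    {i : ℕ} (hT : 0 ≤ Tk u i α) (hτ : Tk u i α < τ)
    (hneg : ∀ r ∈ Ioo (Tk u i α) τ, (-1) ^ i * deriv (u α) r < 0) (h0 : deriv (u α) τ = 0)
    (hstart : 0 < (-1) ^ i * u α (Tk u i α)) (hend : (-1) ^ i * u α τ < 0) :
    Tk u (i + 1) α = τ := by
  set T := Tk u i α with hTdef
  have hw := (hu.isRegularRadial hα).neg_one_pow_mul h1 i
  have hc : ContinuousOn (fun r => (-1) ^ i * u α r) (Icc T τ) :=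
    hw.cont.mono fun r hr => hT.trans hr.1
  have hanti : StrictAntiOn (fun r => (-1) ^ i * u α r) (Icc T τ) := by
    refine strictAntiOn_of_hasDerivWithinAt_neg (convex_Icc _ _) hc
      (f' := fun r => (-1) ^ i * deriv (u α) r) ?_ ?_ <;> rw [interior_Icc]
    · exact fun r hr => (hw.radial r (hT.trans_lt hr.1)).1.hasDerivWithinAt
    · exact hneg
  obtain ⟨z, hz, hz0⟩ := intermediate_value_Icc' hτ.le hc ⟨hend.le, hstart.le⟩
  simp only at hz0
  have hTz : T < z := lt_of_le_of_ne hz.1 (by rintro h; rw [h] at hstart; linarith)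
  have hzτ : z < τ := lt_of_le_of_ne hz.2 (by rintro rfl; linarith)
  have hset : ZsetK u (i + 1) α = Ioc T z := by
    ext r
    rw [mem_ZsetK_succ]
    refine ⟨fun h => ⟨h.1, ?_⟩, fun h => ⟨h.1, fun s hs => ⟨?_, ?_⟩⟩⟩
    · by_contra! hzr
      exact (h.2 z ⟨hTz, hzr⟩).1.ne' hz0
    · have hsz : s < z := hs.2.trans_le h.2
      have := hanti ⟨hs.1.le, (hsz.trans hzτ).le⟩ hz hsz
      simpa only [hz0] using this
    · exact hneg s ⟨hs.1, hs.2.trans_le (h.2.trans hzτ.le)⟩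
  have hZ : Zk u (i + 1) α = z := by
    change sSup (ZsetK u (i + 1) α) = z
    rw [hset, csSup_Ioc hTz]
  change sInf {r | Zk u (i + 1) α < r ∧ deriv (u α) r = 0} = τ
  rw [hZ]
  refine IsLeast.csInf_eq ⟨⟨hzτ, h0⟩, fun r hr => ?_⟩
  by_contra! hrτ
  have := hneg r ⟨hTz.trans hr.1, hrτ⟩
  rw [hr.2, mul_zero] at this
  exact this.ne rfl

/-- The extremal point `T_i` depends continuously on the initial value near `αs`, with extremal
value beyond `β` in modulus. -/
def StableAt (β : ℝ) (u : ℝ → ℝ → ℝ) (αs : ℝ) (i : ℕ) : Prop :=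
  ContinuousAt (Tk u i) αs ∧ ∀ᶠ α in nhds αs, 0 ≤ Tk u i α ∧ deriv (u α) (Tk u i α) = 0 ∧
    β < (-1) ^ i * u α (Tk u i α)

lemma StableAt.eventually_deriv_neg (h1 : Hf1 f b β) (hu : Family (N + 1) f u) {αs : ℝ}
    (hα : 0 < αs) {i : ℕ} (h : StableAt β u αs i) :
    ∃ ε₁ > 0, ∀ ε, 0 < ε → ε ≤ ε₁ → ∀ᶠ α in nhds αs, Tk u i α < Tk u i αs + ε ∧
      ∀ r ∈ Ioc (Tk u i α) (Tk u i αs + ε), (-1) ^ i * deriv (u α) r < 0 := by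
  obtain ⟨hT0, -, hβ⟩ := h.2.self_of_nhds
  obtain ⟨ε₁, hε₁, hev⟩ := exists_eventually_lt
    (g := fun p => (-1) ^ i * u p.1 p.2) (hu.2.1.const_mul _) hα hT0 hβ
  refine ⟨ε₁, hε₁, fun ε hε hεle => ?_⟩
  have hcont := Metric.continuousAt_iff'.1 h.1 ε hε
  filter_upwards [hev, hcont, h.2, eventually_gt_nhds hα] with α h2 h3 h4 h5
  rw [Real.dist_eq, abs_lt] at h3
  refine ⟨by linarith, ?_⟩
  refine ((hu.isRegularRadial h5).neg_one_pow_mul h1 i).deriv_neg_of_critical h4.1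
    (by simp [h4.2.1]) fun r hr => h1.pos_of_beta_lt (h2 r (h4.1.trans hr.1.le) ?_)
  rw [abs_le]
  constructor <;> linarith [hr.1, hr.2]

lemma StableAt.succ (h1 : Hf1 f b β) (hu : Family (N + 1) f u) {αs : ℝ}
    (hα : 0 < αs) {i : ℕ} (h : StableAt β u αs i) (hlt : Tk u i αs < Tk u (i + 1) αs)
    (hd : deriv (u αs) (Tk u (i + 1) αs) = 0)
    (hneg : ∀ r ∈ Ioo (Tk u i αs) (Tk u (i + 1) αs), (-1) ^ i * deriv (u αs) r < 0)
    (hβ : β < (-1) ^ (i + 1) * u αs (Tk u (i + 1) αs)) :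
    StableAt β u αs (i + 1) ∧ ∀ᶠ α in nhds αs, Tk u i α < Tk u (i + 1) α ∧
      ∀ r ∈ Ioo (Tk u i α) (Tk u (i + 1) α), (-1) ^ i * deriv (u α) r < 0 := by
  obtain ⟨hT0, -, -⟩ := h.2.self_of_nhds
  set T := Tk u i αs with hT
  set S := Tk u (i + 1) αs with hS
  have hβ0 : 0 < β := h1.2.2.1.trans h1.2.2.2.1
  have hS0 : 0 < S := hT0.trans_lt hlt
  obtain ⟨ε₁, hε₁, hright⟩ := h.eventually_deriv_neg h1 hu hα
  obtain ⟨ε₂, hε₂, hev⟩ := exists_eventually_lt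
    (g := fun p => (-1) ^ (i + 1) * u p.1 p.2) (hu.2.1.const_mul _) hα hS0.le hβ
  have key : ∀ ε > 0, ∀ᶠ α in nhds αs, |Tk u (i + 1) α - S| < ε ∧
      deriv (u α) (Tk u (i + 1) α) = 0 ∧ β < (-1) ^ (i + 1) * u α (Tk u (i + 1) α) ∧
      Tk u i α < Tk u (i + 1) α ∧
      ∀ r ∈ Ioo (Tk u i α) (Tk u (i + 1) α), (-1) ^ i * deriv (u α) r < 0 := by
    intro ε hε
    set d := (S - T) / 3 with hd3
    have hd0 : 0 < d := by linarith
    obtain ⟨e, he, hele⟩ : ∃ e > 0, e ≤ min (ε / 2) (min ε₂ d) :=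
      ⟨_, lt_min (half_pos hε) (lt_min hε₂ hd0), le_rfl⟩
    obtain ⟨heε, he'⟩ := le_min_iff.1 hele
    obtain ⟨he2, hed⟩ := le_min_iff.1 he'
    obtain ⟨e', he', hele'⟩ : ∃ e' > 0, e' ≤ min ε₁ d := ⟨_, lt_min hε₁ hd0, le_rfl⟩
    obtain ⟨he1, hed'⟩ := le_min_iff.1 hele'
    have hK := eventually_forall_lt_of_isCompact (c := 0)
      (g := fun p => (-1) ^ i * deriv (u p.1) p.2) (hu.2.2.const_mul _) hα
      (isCompact_Icc (a := T + e') (b := S - e))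
      (fun r hr => mem_Ici.2 (by linarith [hr.1]))
      (fun r hr => hneg r ⟨by linarith [hr.1], by linarith [hr.2]⟩)
    have hend := eventually_forall_lt_of_isCompact (c := 0)
      (g := fun p => (-1) ^ (i + 1) * deriv (u p.1) p.2) (hu.2.2.const_mul _) hα
      (isCompact_singleton (x := S + e))
      (by rw [singleton_subset_iff, mem_Ici]; linarith)
      (by
        rintro r rfl
        refine ((hu.isRegularRadial hα).neg_one_pow_mul h1 (i + 1)).deriv_neg_of_critical hS0.le
          (by simp [hd]) (fun r hr => h1.pos_of_beta_lt (hev.self_of_nhds r ?_ ?_)) _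
          ⟨by linarith, le_rfl⟩
        · linarith [hr.1]
        · rw [abs_le]
          constructor <;> linarith [hr.1, hr.2])
    filter_upwards [hK, hend, hev, hright e' he' he1, h.2, eventually_gt_nhds hα]
      with α gK gend gev gright gT gα
    have hw := (hu.isRegularRadial gα).neg_one_pow_mul h1 (i + 1)
    have gS : 0 < (-1) ^ (i + 1) * deriv (u α) (S - e) := by
      have := gK (S - e) ⟨by linarith, le_rfl⟩
      simp only [pow_succ]
      linarith
    obtain ⟨τ, hτ, hτ0⟩ := intermediate_value_Icc' (by linarith : S - e ≤ S + e)
      (hw.cont'.mono fun r hr => mem_Ici.2 (by linarith [hr.1]))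
      ⟨(gend _ rfl).le, gS.le⟩
    simp only at hτ0
    have hτe : S - e < τ := lt_of_le_of_ne hτ.1 (by rintro h; rw [h] at gS; linarith)
    have hβτ : β < (-1) ^ (i + 1) * u α τ := gev τ (by linarith)
      (by rw [abs_le]; constructor <;> linarith [hτ.1, hτ.2])
    have hτneg : ∀ r ∈ Ioo (Tk u i α) τ, (-1) ^ i * deriv (u α) r < 0 := by
      intro r hr
      rcases le_or_gt r (T + e') with hr1 | hr1
      · exact gright.2 r ⟨hr.1, hr1⟩
      rcases le_or_gt r (S - e) with hr2 | hr2
      · exact gK r ⟨hr1.le, hr2⟩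
      have := hw.deriv_pos_of_critical (a := S - e) (b := τ) (by linarith) hτ0
        (fun t ht => h1.pos_of_beta_lt (gev t (by linarith [ht.1])
          (by rw [abs_le]; constructor <;> linarith [ht.1, ht.2, hτ.2]))) r ⟨hr2, hr.2⟩
      simp only [pow_succ] at this
      linarith
    have hτT : Tk u i α < τ := by linarith [gright.1]
    have heq : Tk u (i + 1) α = τ := by
      refine Tk_succ_eq h1 hu gα gT.1 hτT hτneg (neg_one_pow_mul_eq_zero.1 hτ0)
        (hβ0.trans gT.2.2) ?_
      rw [pow_succ] at hβτ
      linarith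
    rw [heq]
    refine ⟨?_, neg_one_pow_mul_eq_zero.1 hτ0, hβτ, hτT, hτneg⟩
    rw [abs_lt]
    constructor <;> linarith [hτ.1, hτ.2]
  refine ⟨⟨Metric.continuousAt_iff'.2 fun ε hε => (key ε hε).mono fun α h => h.1, ?_⟩,
    (key 1 one_pos).mono fun α h => h.2.2.2⟩
  filter_upwards [key 1 one_pos, h.2] with α g1 g2
  exact ⟨g2.1.trans g1.2.2.2.1.le, g1.2.1, g1.2.2.1⟩

end Family

section Family

variable {N : ℕ} {f : ℝ → ℝ} {b β : ℝ} {u : ℝ → ℝ → ℝ}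

/-- Solutions close to `u αs` meet pairwise along a monotone branch of `u αs` which starts and
ends with zero slope. -/
lemma exists_crossing_of_branch (h1 : Hf1 f b β) (hN : 0 < N) (hu : Family (N + 1) f u) {αs : ℝ}
    (hα : 0 < αs) {i : ℕ} {T p : ℝ} {I : Set ℝ} (hT : 0 ≤ T) (hdT : deriv (u αs) T = 0)
    (hβ : β < (-1) ^ i * u αs T) (hI : IsOpen I) (hIc : I.OrdConnected) (hIT : ∀ r ∈ I, T < r)
    (hp : T < p) (hpI : Ioo T p ⊆ I) (hneg : ∀ r ∈ I, (-1) ^ i * deriv (u αs) r < 0)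
    (hbot : ∀ e > 0, ∃ y ∈ I, ∀ r ∈ I, y ≤ r → -e ≤ (-1) ^ i * deriv (u αs) r)
    (hfbot : ∃ y ∈ I, ∀ r ∈ I, y ≤ r → f ((-1) ^ i * u αs r) ≤ 0)
    {C : ℝ} (hC : ∀ r ∈ I, |f ((-1) ^ i * u αs r)| ≤ C) :
    ∃ ra ∈ I, ∃ rb ∈ I, ∃ U ∈ nhds αs, ∀ α₁ ∈ U, ∀ α₂ ∈ U, ∃ t ∈ Icc ra rb, u α₁ t = u α₂ t := by
  have hw := (hu.isRegularRadial hα).neg_one_pow_mul h1 i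
  have htop : ∀ e > 0, ∃ y ∈ I, ∀ r ∈ I, r ≤ y → -e ≤ (-1) ^ i * deriv (u αs) r := by
    intro e he
    obtain ⟨y, hy, h⟩ := exists_forall_le_of_eventually_nhdsGT
      ((tendsto_nhdsGT_of_continuousOn_Ici hw.cont' hT).eventually
        (lt_mem_nhds (a := -e) (by simp [hdT, he]))) hp
    exact ⟨y, hpI hy, fun r hr hry => (h r (hIT r hr) hry).le⟩
  have hftop : ∃ y ∈ I, ∀ r ∈ I, r ≤ y → 0 ≤ f ((-1) ^ i * u αs r) := by
    obtain ⟨y, hy, h⟩ := exists_forall_le_of_eventually_nhdsGT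
      ((tendsto_nhdsGT_of_continuousOn_Ici hw.cont hT).eventually (lt_mem_nhds hβ)) hp
    exact ⟨y, hpI hy, fun r hr hry => (h1.pos_of_beta_lt (h r (hIT r hr) hry)).le⟩
  obtain ⟨ra, hra, rb, hrb, η, hη, hcross⟩ := IsRadial.exists_crossing (ν := N)
    (by exact_mod_cast hN) hI hIc (fun r hr => hT.trans_lt (hIT r hr)) hw.radial hneg htop hbot
    hftop hfbot hC
  refine ⟨ra, hra, rb, hrb, {α | 0 < α ∧ ∀ r ∈ Icc ra rb,
    |(-1) ^ i * u α r - (-1) ^ i * u αs r| < η ∧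
    |(-1) ^ i * deriv (u α) r - (-1) ^ i * deriv (u αs) r| < η}, ?_, ?_⟩
  · have hsub : Icc ra rb ⊆ Ici 0 := fun r hr => hT.trans ((hIT ra hra).le.trans hr.1)
    have e1 := eventually_forall_dist_lt (g := fun p => (-1) ^ i * u p.1 p.2)
      (hu.2.1.const_mul _) hα isCompact_Icc hsub hη
    have e2 := eventually_forall_dist_lt (g := fun p => (-1) ^ i * deriv (u p.1) p.2)
      (hu.2.2.const_mul _) hα isCompact_Icc hsub hη
    filter_upwards [e1, e2, eventually_gt_nhds hα] with α g1 g2 g3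
    exact ⟨g3, fun r hr => ⟨g1 r hr, g2 r hr⟩⟩
  · intro α₁ g1 α₂ g2
    obtain ⟨t, ht, h⟩ := hcross _ _ _ _
      ((hu.isRegularRadial g1.1).neg_one_pow_mul h1 i).radial
      ((hu.isRegularRadial g2.1).neg_one_pow_mul h1 i).radial g1.2 g2.2
    refine ⟨t, ht, ?_⟩
    have : (-1) ^ i * (u α₁ t - u α₂ t) = 0 := by
      rw [mul_sub, h, sub_self]
    exact sub_eq_zero.1 (neg_one_pow_mul_eq_zero.1 this)

lemma exists_crossing_between_critical (hf : Continuous f) (h1 : Hf1 f b β) (hN : 0 < N)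
    (hu : Family (N + 1) f u) {αs : ℝ} (hα : 0 < αs) {i : ℕ} {T S : ℝ} (hT : 0 ≤ T) (hTS : T < S)
    (hdT : deriv (u αs) T = 0) (hdS : deriv (u αs) S = 0) (hβT : β < (-1) ^ i * u αs T)
    (hβS : β < (-1) ^ (i + 1) * u αs S)
    (hneg : ∀ r ∈ Ioo T S, (-1) ^ i * deriv (u αs) r < 0) :
    ∃ ra ∈ Ioo T S, ∃ rb ∈ Ioo T S, ∃ U ∈ nhds αs, ∀ α₁ ∈ U, ∀ α₂ ∈ U, ∃ t ∈ Icc ra rb,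
      u α₁ t = u α₂ t := by
  have hw := (hu.isRegularRadial hα).neg_one_pow_mul h1 i
  have hS : 0 < S := hT.trans_lt hTS
  obtain ⟨C, hC⟩ := (isCompact_Icc (a := T) (b := S)).exists_bound_of_continuousOn
    (f := fun r => f ((-1) ^ i * u αs r))
    (hf.comp_continuousOn (hw.cont.mono fun r hr => hT.trans hr.1))
  refine exists_crossing_of_branch h1 hN hu hα hT hdT hβT isOpen_Ioo ordConnected_Ioo
    (fun r hr => hr.1) hTS subset_rfl hneg ?_ ?_ (fun r hr => hC r (Ioo_subset_Icc_self hr))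
  · intro e he
    obtain ⟨y, hy, h⟩ := exists_forall_ge_of_eventually_nhdsLT
      ((tendsto_nhdsLT_of_continuousOn_Ici hw.cont' hS).eventually
        (lt_mem_nhds (a := -e) (by simp [hdS, he]))) hTS
    exact ⟨y, hy, fun r hr hry => (h r hr.2 hry).le⟩
  · have hlt : (-1) ^ i * u αs S < -β := by
      rw [pow_succ] at hβS
      linarith
    obtain ⟨y, hy, h⟩ := exists_forall_ge_of_eventually_nhdsLT
      ((tendsto_nhdsLT_of_continuousOn_Ici hw.cont hS).eventually (gt_mem_nhds hlt)) hTS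
    refine ⟨y, hy, fun r hr hry => ?_⟩
    have h3 := h1.pos_of_beta_lt (lt_neg.1 (h r hr.2 hry))
    rw [h1.1] at h3
    linarith

/-- The last branch of a solution in `G_{m+1}`: it decays to zero together with its slope. -/
lemma exists_final_branch (h1 : Hf1 f b β) (hN : 0 < N) (hu : Family (N + 1) f u) {αs : ℝ}
    (hα : 0 < αs) {i : ℕ} (hT : 0 ≤ Tk u i αs) (hz : uAtZ u (i + 1) αs = 0)
    (hdz : duAtZ u (i + 1) αs = 0) :
    ∃ I : Set ℝ, IsOpen I ∧ I.OrdConnected ∧ (∀ r ∈ I, Tk u i αs < r) ∧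
      (∃ p > Tk u i αs, Ioo (Tk u i αs) p ⊆ I) ∧
      (∀ r ∈ I, 0 < (-1) ^ i * u αs r ∧ (-1) ^ i * deriv (u αs) r < 0) ∧
      (∀ e > 0, ∃ y ∈ I, ∀ r ∈ I, y ≤ r → |u αs r| < e ∧ |deriv (u αs) r| < e) ∧
      (BddAbove (ZsetK u (i + 1) αs) → ∀ r ∈ I, r < Zk u (i + 1) αs) := by
  have hv := hu.isRegularRadial hα
  rcases branch_cases h1 hN hu hα hT hz with ⟨hTZ, hs, hZ0, hd⟩ | ⟨hb, hs, hl, hl', -⟩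
  · refine ⟨Ioo (Tk u i αs) (Zk u (i + 1) αs), isOpen_Ioo, ordConnected_Ioo, fun r hr => hr.1,
      ⟨_, hTZ, subset_rfl⟩, hs, fun e he => ?_, fun _ r hr => hr.2⟩
    have hZpos := hT.trans_lt hTZ
    rw [hd] at hdz
    have t1 := (tendsto_nhdsLT_of_continuousOn_Ici hv.cont hZpos).abs.eventually
      (gt_mem_nhds (show |u αs (Zk u (i + 1) αs)| < e by rwa [hZ0, abs_zero]))
    have t2 := (tendsto_nhdsLT_of_continuousOn_Ici hv.cont' hZpos).abs.eventually
      (gt_mem_nhds (show |deriv (u αs) (Zk u (i + 1) αs)| < e by rwa [hdz, abs_zero]))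
    obtain ⟨y, hy, h⟩ := exists_forall_ge_of_eventually_nhdsLT (t1.and t2) hTZ
    exact ⟨y, hy, fun r hr hry => h r hr.2 hry⟩
  · refine ⟨Ioi (Tk u i αs), isOpen_Ioi, ordConnected_Ioi, fun r hr => hr,
      ⟨Tk u i αs + 1, by simp, Ioo_subset_Ioi_self⟩, hs, fun e he => ?_, fun h => absurd h hb⟩
    have t1 := hl.abs.eventually (gt_mem_nhds (show |(0 : ℝ)| < e by rwa [abs_zero]))
    have t2 := hl'.abs.eventually (gt_mem_nhds (show |(0 : ℝ)| < e by rwa [abs_zero]))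
    obtain ⟨y, h⟩ := eventually_atTop.1 ((t1.and t2).and (eventually_gt_atTop (Tk u i αs)))
    exact ⟨y, (h y le_rfl).2, fun r hr hry => (h r hry).1⟩

lemma energy_pos_of_final_branch (hf : Continuous f) (h1 : Hf1 f b β) (hN : 0 < N)
    (hu : Family (N + 1) f u) {αs : ℝ} (hα : 0 < αs) {i : ℕ} (hT : 0 ≤ Tk u i αs)
    (hz : uAtZ u (i + 1) αs = 0) (hdz : duAtZ u (i + 1) αs = 0)
    (hd : deriv (u αs) (Tk u i αs) = 0) : 0 < Fint f (u αs (Tk u i αs)) := by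
  have hv := hu.isRegularRadial hα
  obtain ⟨I, -, hIc, hIT, ⟨p, hp, hpI⟩, hs, hbot, -⟩ :=
    exists_final_branch h1 hN hu hα hT hz hdz
  have hF0 : ContinuousAt (Fint f) 0 := (hasDerivAt_Fint hf 0).continuousAt
  have hnn : ∀ x ∈ I, 0 ≤ deriv (u αs) x ^ 2 / 2 + Fint f (u αs x) := by
    intro x hx
    refine le_of_forall_pos_lt_add fun e he => ?_
    obtain ⟨δ, hδ, h⟩ := Metric.continuousAt_iff.1 hF0 e he
    obtain ⟨y, hy, hyb⟩ := hbot δ hδ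
    have hmem : max x y ∈ I := by
      rcases max_choice x y with h | h <;> rw [h] <;> assumption
    have h3 := h (x := u αs (max x y)) (by simpa using (hyb _ hmem (le_max_right _ _)).1)
    have h00 : Fint f 0 = 0 := by simp [Fint]
    rw [h00, Real.dist_eq, sub_zero, abs_lt] at h3
    have h4 := hv.energy_antitoneOn hf (mem_Ici.2 (hT.trans (hIT x hx).le))
      (mem_Ici.2 (hT.trans (hIT _ hmem).le)) (le_max_left x y)
    simp only at h4
    nlinarith [sq_nonneg (deriv (u αs) (max x y))]
  obtain ⟨q, hq⟩ := exists_between hp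
  have h5 := hv.energy_lt hf hN hT hq.1 fun r hr h0 => by
    have := (hs r (hpI ⟨hr.1, hr.2.trans hq.2⟩)).2
    simp [h0] at this
  have h6 := hnn q (hpI hq)
  rw [hd] at h5
  norm_num at h5
  linarith

lemma exists_crossing_final (hf : Continuous f) (h1 : Hf1 f b β) (hN : 0 < N)
    (hu : Family (N + 1) f u) {αs : ℝ} (hα : 0 < αs) {i : ℕ} (hT : 0 ≤ Tk u i αs)
    (hz : uAtZ u (i + 1) αs = 0) (hdz : duAtZ u (i + 1) αs = 0)
    (hd : deriv (u αs) (Tk u i αs) = 0) (hβ : β < (-1) ^ i * u αs (Tk u i αs)) :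
    ∃ U ∈ nhds αs, ∀ α₁ ∈ U, ∀ α₂ ∈ U, ∃ t, Tk u i αs < t ∧
      (BddAbove (ZsetK u (i + 1) αs) → t < Zk u (i + 1) αs) ∧ u α₁ t = u α₂ t := by
  have hw := (hu.isRegularRadial hα).neg_one_pow_mul h1 i
  obtain ⟨I, hI, hIc, hIT, ⟨p, hp, hpI⟩, hs, hbot, hZ⟩ :=
    exists_final_branch h1 hN hu hα hT hz hdz
  have habs : ∀ x : ℝ, |(-1) ^ i * x| = |x| := fun x => by simp [abs_mul]
  obtain ⟨C, hC⟩ := (isCompact_Icc (a := 0)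
    (b := (-1) ^ i * u αs (Tk u i αs))).exists_bound_of_continuousOn hf.continuousOn
  have hle : ∀ r ∈ I, (-1) ^ i * u αs r ≤ (-1) ^ i * u αs (Tk u i αs) := by
    intro r hr
    have hTr := hIT r hr
    refine antitoneOn_of_hasDerivWithinAt_nonpos (convex_Icc (Tk u i αs) r)
      (hw.cont.mono fun t ht => hT.trans ht.1) (f' := fun r => (-1) ^ i * deriv (u αs) r)
      ?_ ?_ (left_mem_Icc.2 hTr.le) (right_mem_Icc.2 hTr.le) hTr.le <;> rw [interior_Icc]
    · exact fun t ht => (hw.radial t (hT.trans_lt ht.1)).1.hasDerivWithinAt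
    · intro t ht
      obtain ⟨q, hq, hq'⟩ := exists_between (lt_min ht.1 hp)
      exact (hs t (hIc.out (hpI ⟨hq, hq'.trans_le (min_le_right _ _)⟩) hr
        ⟨hq'.le.trans (min_le_left _ _), ht.2.le⟩)).2.le
  obtain ⟨ra, hra, rb, hrb, U, hU, hcross⟩ := exists_crossing_of_branch h1 hN hu hα hT hd hβ hI hIc
    hIT hp hpI (fun r hr => (hs r hr).2)
    (fun e he => by
      obtain ⟨y, hy, h⟩ := hbot e he
      refine ⟨y, hy, fun r hr hry => ?_⟩
      have := (h r hr hry).2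
      rw [← habs, abs_lt] at this
      exact this.1.le)
    (by
      obtain ⟨y, hy, h⟩ := hbot b h1.2.2.1
      refine ⟨y, hy, fun r hr hry => ?_⟩
      have := (h r hr hry).1
      rw [← habs, abs_lt] at this
      exact h1.2.2.2.2.2.1 _ ⟨(hs r hr).1.le, this.2.le⟩)
    (fun r hr => hC _ ⟨(hs r hr).1.le, hle r hr⟩)
  refine ⟨U, hU, fun α₁ g1 α₂ g2 => ?_⟩
  obtain ⟨t, ht, heq⟩ := hcross α₁ g1 α₂ g2
  exact ⟨t, (hIT ra hra).trans_le ht.1, fun h => ht.2.trans_lt (hZ h rb hrb), heq⟩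

/-- The extremal points of a solution in `G_{m+1}`. -/
lemma critical_chain (hf : Continuous f) (h1 : Hf1 f b β) (hN : 0 < N)
    (hu : Family (N + 1) f u) {αs : ℝ} {m : ℕ} (hG : αs ∈ Gk u (m + 1)) :
    (∀ i ≤ m, 0 ≤ Tk u i αs ∧ deriv (u αs) (Tk u i αs) = 0 ∧
      β < (-1) ^ i * u αs (Tk u i αs)) ∧
    ∀ i < m, Tk u i αs < Tk u (i + 1) αs ∧
      ∀ r ∈ Ioo (Tk u i αs) (Tk u (i + 1) αs), (-1) ^ i * deriv (u αs) r < 0 := by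
  obtain ⟨hα, hNd, hz, hdz⟩ := mem_Gk_succ hG
  have hv := hu.isRegularRadial hα
  have hcrit : ∀ i ≤ m, 0 ≤ Tk u i αs ∧ deriv (u αs) (Tk u i αs) = 0 := by
    intro i
    induction i with
    | zero => exact fun _ => ⟨le_rfl, (hu.1 αs hα).2.1⟩
    | succ i ih =>
      intro hi
      obtain ⟨g1, g2, g3⟩ := hNd i hi
      have := next_critical h1 hN hu hα (ih (by omega)).1 g1 g2 g3
      exact ⟨(ih (by omega)).1.trans this.1.le, this.2.1⟩
  have hnext : ∀ i < m, Tk u i αs < Tk u (i + 1) αs ∧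
      ∀ r ∈ Ioo (Tk u i αs) (Tk u (i + 1) αs), (-1) ^ i * deriv (u αs) r < 0 := by
    intro i hi
    obtain ⟨g1, g2, g3⟩ := hNd i hi
    have := next_critical h1 hN hu hα (hcrit i hi.le).1 g1 g2 g3
    exact ⟨this.1, this.2.2⟩
  have hmono : ∀ i j, i ≤ j → j ≤ m → Tk u i αs ≤ Tk u j αs := by
    intro i j hij
    induction j, hij using Nat.le_induction with
    | base => exact fun _ => le_rfl
    | succ j hj ih => exact fun h => (ih (by omega)).trans (hnext j h).1.le
  refine ⟨fun i hi => ⟨(hcrit i hi).1, (hcrit i hi).2, ?_⟩, hnext⟩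
  have hzi : uAtZ u (i + 1) αs = 0 := by
    rcases Nat.lt_or_ge i m with h | h
    · exact (hNd i h).1
    · obtain rfl : i = m := by omega
      exact hz
  refine h1.beta_lt_of_Fint_pos hf (nonneg_of_uAtZ h1 hN hu hα (hcrit i hi).1 hzi) ?_
  have hpos := energy_pos_of_final_branch hf h1 hN hu hα (hcrit m le_rfl).1 hz hdz
    (hcrit m le_rfl).2
  have := hv.energy_antitoneOn hf (hcrit i hi).1 (hcrit m le_rfl).1 (hmono i m hi le_rfl)
  simp only [(hcrit i hi).2, (hcrit m le_rfl).2] at this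
  linarith

/-- All extremal points of a solution in `G_{m+1}` are stable. -/
lemma stableAt_of_mem_Gk (hf : Continuous f) (h1 : Hf1 f b β) (hN : 0 < N)
    (hu : Family (N + 1) f u) {αs : ℝ} {m : ℕ} (hG : αs ∈ Gk u (m + 1)) :
    (∀ i ≤ m, StableAt β u αs i) ∧ ∀ i < m, ∀ᶠ α in nhds αs, Tk u i α < Tk u (i + 1) α ∧
      ∀ r ∈ Ioo (Tk u i α) (Tk u (i + 1) α), (-1) ^ i * deriv (u α) r < 0 := by
  have hα := (mem_Gk_succ hG).1
  obtain ⟨hc, hn⟩ := critical_chain hf h1 hN hu hG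
  have hst : ∀ i ≤ m, StableAt β u αs i := by
    intro i
    induction i with
    | zero =>
      intro _
      have hβ : β < αs := by
        have := (hc 0 (Nat.zero_le m)).2.2
        rwa [pow_zero, one_mul, show Tk u 0 αs = 0 from rfl, (hu.1 αs hα).1] at this
      refine ⟨continuousAt_const, ?_⟩
      filter_upwards [eventually_gt_nhds hα, eventually_gt_nhds hβ] with α g1 g2
      refine ⟨le_rfl, (hu.1 α g1).2.1, ?_⟩
      rwa [pow_zero, one_mul, show Tk u 0 α = 0 from rfl, (hu.1 α g1).1]
    | succ i ih =>
      intro hi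
      exact ((ih (by omega)).succ h1 hu hα (hn i hi).1 (hc (i + 1) hi).2.1 (hn i hi).2
        (hc (i + 1) hi).2.2).1
  exact ⟨hst, fun i hi => ((hst i hi.le).succ h1 hu hα (hn i hi).1 (hc (i + 1) hi).2.1 (hn i hi).2
        (hc (i + 1) hi).2.2).2⟩

/-- A solution which is strictly monotone to the right of the extremal point `T`, with value
beyond `β`, has there neither a high minimum nor a low maximum. -/
lemma extremal_value {v : ℝ → ℝ} {i : ℕ} {T q : ℝ} (hTq : T < q)
    (hc : ContinuousOn v (Icc T q)) (hneg : ∀ r ∈ Ioo T q, (-1) ^ i * deriv v r < 0)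
    (hβ : β < (-1) ^ i * v T) :
    (IsLocalMin v T → v T < -β) ∧ (IsLocalMax v T → β < v T) := by
  rcases neg_one_pow_eq_or ℝ i with h | h
  · simp only [h, one_mul] at hneg hβ
    exact ⟨fun hm => absurd hm (not_isLocalMin_of_deriv_neg hTq hc hneg), fun _ => hβ⟩
  · simp only [h, neg_mul, one_mul] at hneg hβ
    refine ⟨fun _ => by linarith, fun hm => absurd hm.neg
      (not_isLocalMin_of_deriv_neg hTq hc.neg fun r hr => ?_)⟩
    rw [deriv.fun_neg]
    exact hneg r hr

end Family

/-- **Lemma 4.1 (the δ₁-lemma).** Under (f1), (f2), if `α* ∈ G_k` then there are `a > 0`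
and `δ₁ > 0` such that every solution with initial value in `(α*-δ₁, α*+δ₁)` has exactly
`k` extremal points in `[0, T_{k-1}(α*) + a]`, with minimum values `< -β` and maximum
values `> β`; moreover two such solutions intersect between any two of their consecutive
extremal points, and in `(T_{k-1}(α*), Z_k(α*))`. -/
theorem delta_one_lemma
    (n : ℕ) (hn : 2 ≤ n)
    (f : ℝ → ℝ) (b β : ℝ) (hf : Continuous f)
    (h1 : Hf1 f b β) (h2 : Hf2 f)
    (u : ℝ → ℝ → ℝ) (hu : Family n f u)
    (k : ℕ) (hk : 1 ≤ k) (αs : ℝ) (hαs : αs ∈ Gk u k) :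
    ∃ a δ₁ : ℝ, DeltaOneLemma f β u k αs a δ₁ := by
  obtain ⟨N, rfl⟩ : ∃ N, n = N + 1 := ⟨n - 1, by omega⟩
  obtain ⟨m, rfl⟩ : ∃ m, k = m + 1 := ⟨k - 1, by omega⟩
  have hN : 0 < N := by omega
  obtain ⟨hα, -, hz, hdz⟩ := mem_Gk_succ hαs
  obtain ⟨hc, hnx⟩ := critical_chain hf h1 hN hu hαs
  obtain ⟨hst, hstep⟩ := stableAt_of_mem_Gk hf h1 hN hu hαs
  obtain ⟨a, ha, hlast⟩ := (hst m le_rfl).eventually_deriv_neg h1 hu hα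
  have hlast := hlast a ha le_rfl
  have hcross : ∀ i < m, ∃ U ∈ nhds αs, ∀ α₁ ∈ U, ∀ α₂ ∈ U,
      ∃ t, max (Tk u i α₁) (Tk u i α₂) < t ∧ t < min (Tk u (i + 1) α₁) (Tk u (i + 1) α₂) ∧
        u α₁ t = u α₂ t := by
    intro i hi
    obtain ⟨ra, hra, rb, hrb, U, hU, hUc⟩ := exists_crossing_between_critical hf h1 hN hu hα
      (hc i hi.le).1 (hnx i hi).1 (hc i hi.le).2.1 (hc (i + 1) hi).2.1 (hc i hi.le).2.2
      (hc (i + 1) hi).2.2 (hnx i hi).2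
    refine ⟨_, inter_mem hU (inter_mem ((hst i hi.le).1.eventually (gt_mem_nhds hra.1))
      ((hst (i + 1) hi).1.eventually (lt_mem_nhds hrb.2))), ?_⟩
    rintro α₁ ⟨g1, g2, g3⟩ α₂ ⟨g4, g5, g6⟩
    obtain ⟨t, ht, heq⟩ := hUc α₁ g1 α₂ g4
    exact ⟨t, (max_lt g2 g5).trans_le ht.1, ht.2.trans_lt (lt_min g3 g6), heq⟩
  choose! U hU hUc using hcross
  obtain ⟨V, hV, hVc⟩ := exists_crossing_final hf h1 hN hu hα (hc m le_rfl).1 hz hdz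
    (hc m le_rfl).2.1 (hc m le_rfl).2.2
  have hall : ∀ᶠ α in nhds αs, 0 < α ∧ α ∈ V ∧
      (Tk u m α < Tk u m αs + a ∧
        ∀ r ∈ Ioc (Tk u m α) (Tk u m αs + a), (-1) ^ m * deriv (u α) r < 0) ∧
      (∀ i ∈ Iio m, α ∈ U i) ∧
      (∀ i ∈ Iio m, Tk u i α < Tk u (i + 1) α ∧
        ∀ r ∈ Ioo (Tk u i α) (Tk u (i + 1) α), (-1) ^ i * deriv (u α) r < 0) ∧
      ∀ i ∈ Iic m, 0 ≤ Tk u i α ∧ deriv (u α) (Tk u i α) = 0 ∧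
        β < (-1) ^ i * u α (Tk u i α) :=
    (eventually_gt_nhds hα).and <| Eventually.and hV <| hlast.and <|
      ((eventually_all_finite (finite_Iio m)).2 hU).and <|
      ((eventually_all_finite (finite_Iio m)).2 hstep).and
      ((eventually_all_finite (finite_Iic m)).2 fun i hi => (hst i hi).2)
  obtain ⟨δ, hδ, hball⟩ := Metric.eventually_nhds_iff_ball.1 hall
  rw [Real.ball_eq_Ioo] at hball
  refine ⟨a, δ, ha, hδ, fun α hαm => ?_, fun α₁ hα₁ α₂ hα₂ _ => ⟨fun i hi hik => ?_, ?_⟩⟩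
  · obtain ⟨hα0, -, hlt, -, hbr, hcr⟩ := hball α hαm
    have hv := hu.isRegularRadial hα0
    have hne : ∀ (i : ℕ) {x : ℝ}, (-1) ^ i * x < 0 → x ≠ 0 := by
      rintro i _ h rfl
      simp at h
    obtain ⟨himg, hinj⟩ := zeros_eq_image (t := fun i => Tk u i α) (g := deriv (u α))
      (fun i hi => (hbr i hi).1) hlt.1 (fun i hi => (hcr i hi).2.1)
      (fun i hi r hr => hne i ((hbr i hi).2 r hr)) (fun r hr => hne m (hlt.2 r hr))
    have hE : ExtSet u α (Tk u (m + 1 - 1) αs + a) =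
        (fun i => Tk u i α) '' (Finset.range (m + 1) : Set ℕ) := himg
    rw [hE]
    refine ⟨(Finset.finite_toSet _).image _, ?_, ?_⟩
    · rw [hinj.ncard_image, ncard_coe_finset, Finset.card_range]
    · rintro _ ⟨i, hi, rfl⟩
      have hi : i ≤ m := by
        simp only [Finset.coe_range, mem_Iio] at hi
        omega
      obtain ⟨g1, -, g3⟩ := hcr i hi
      rcases Nat.lt_or_ge i m with him | him
      · exact extremal_value (hbr i him).1 (hv.cont.mono fun r hr => g1.trans hr.1)
          (hbr i him).2 g3
      · obtain rfl : i = m := by omega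
        exact extremal_value hlt.1 (hv.cont.mono fun r hr => g1.trans hr.1)
          (fun r hr => hlt.2 r ⟨hr.1, hr.2.le⟩) g3
  · obtain ⟨j, rfl⟩ : ∃ j, i = j + 1 := ⟨i - 1, by omega⟩
    have hj : j < m := by omega
    exact hUc j hj α₁ ((hball α₁ hα₁).2.2.2.1 j hj) α₂ ((hball α₂ hα₂).2.2.2.1 j hj)
  · exact hVc α₁ (hball α₁ hα₁).2.1 α₂ (hball α₂ hα₂).2.1
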